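/- arXiv:1905.09641 — 3 statements merged into one kernel-verified Lean document; each statement's English description precedes it below -/
import Mathlib

section
/- For b ≥ 2, a permutation σ of {0,...,b-1}, and a ∈ {1,...,b-1}, let σ'(x) = σ(x) + a mod b. Then for all N ≥ 1, the extreme discrepancy of the first N points of the permuted van der Corput sequence satisfies D_N(S_b^σ) = D_N(S_b^{σ'}). -/
open scoped Classical

/-- The permuted `b`-adic radical inverse function of Faure. -/
noncomputable def Sperm (b : ℕ) (σ : ℕ → ℕ) (n : ℕ) : ℝ :=
  ∑' j : ℕ, (σ (n / b ^ j % b) : ℝ) / b ^ (j + 1)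

/-- Extreme discrepancy of the first `N` points of a sequence in `[0,1)`. -/
noncomputable def disc (N : ℕ) (x : ℕ → ℝ) : ℝ :=
  ⨆ I : {p : ℝ × ℝ // 0 ≤ p.1 ∧ p.1 < p.2 ∧ p.2 ≤ 1},
    |(((Finset.range N).filter fun i => I.1.1 ≤ x i ∧ x i < I.1.2).card : ℝ) / N
      - (I.1.2 - I.1.1)|

def Yv (b : ℕ) (σ : ℕ → ℕ) : ℕ → ℕ → ℕ
  | 0, _ => 0
  | k + 1, m => b * Yv b σ k m + σ (m / b ^ k % b)

noncomputable def cnt (Y : ℕ → ℕ) (N l : ℕ) : ℝ :=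
  ∑ m ∈ Finset.range N, if Y m < l then (1 : ℝ) else 0

noncomputable def ee (Y : ℕ → ℕ) (B N l : ℕ) : ℝ := cnt Y N l - (l : ℝ) * N / B

lemma dev_eq (x : ℕ → ℝ) (Y : ℕ → ℕ) (B N : ℕ) (hB : 0 < B) (τ : ℝ)
    (hx : ∀ m < N, x m = ((Y m : ℝ) + τ) / B) (α β : ℝ) (hαβ : α < β) (u v : ℕ)
    (hu : ⌈α * B - τ⌉₊ = u) (hv : ⌈β * B - τ⌉₊ = v) :
    (((Finset.range N).filter fun i => α ≤ x i ∧ x i < β).card : ℝ) - N * (β - α)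
      = ee Y B N v - ee Y B N u
        + N / B * (((v : ℝ) - (β * B - τ)) - ((u : ℝ) - (α * B - τ))) := by
  have hB' : (0 : ℝ) < B := by exact_mod_cast hB
  have huv : u ≤ v := by
    rw [← hu, ← hv]
    apply Nat.ceil_mono
    nlinarith
  have h1 : (((Finset.range N).filter fun i => α ≤ x i ∧ x i < β).card : ℝ)
      = cnt Y N v - cnt Y N u := by
    rw [cnt, cnt, ← Finset.sum_sub_distrib, Finset.card_filter]
    push_cast
    apply Finset.sum_congr rfl
    intro m hm
    have e := hx m (Finset.mem_range.1 hm)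
    have a1 : α ≤ x m ↔ u ≤ Y m := by
      rw [e, le_div_iff₀ hB', ← hu, Nat.ceil_le]
      constructor <;> intro h <;> linarith
    have a2 : x m < β ↔ Y m < v := by
      rw [e, div_lt_iff₀ hB', ← hv, Nat.lt_ceil]
      constructor <;> intro h <;> linarith
    simp only [a1, a2]
    split_ifs <;> first | omega | norm_num
  rw [h1, ee, ee]
  field_simp
  ring

lemma disc_bdd (N : ℕ) (hN : 1 ≤ N) (x : ℕ → ℝ) :
    BddAbove (Set.range fun I : {p : ℝ × ℝ // 0 ≤ p.1 ∧ p.1 < p.2 ∧ p.2 ≤ 1} =>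
    |(((Finset.range N).filter fun i => I.1.1 ≤ x i ∧ x i < I.1.2).card : ℝ) / N
      - (I.1.2 - I.1.1)|) := by
  refine ⟨2, ?_⟩
  rintro _ ⟨⟨⟨α, β⟩, h0, h1, h2⟩, rfl⟩
  dsimp only at *
  have hN' : (0 : ℝ) < N := by exact_mod_cast hN
  have hc : (((Finset.range N).filter fun i => α ≤ x i ∧ x i < β).card : ℝ) ≤ N := by
    exact_mod_cast (Finset.card_filter_le _ _).trans (by simp)
  have hc2 : (((Finset.range N).filter fun i => α ≤ x i ∧ x i < β).card : ℝ) / N ≤ 1 := by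
    rw [div_le_one hN']; exact hc
  have hc3 : 0 ≤ (((Finset.range N).filter fun i => α ≤ x i ∧ x i < β).card : ℝ) / N := by
    positivity
  rw [abs_le]
  constructor <;> linarith

lemma le_disc (N : ℕ) (hN : 1 ≤ N) (x : ℕ → ℝ) (α β : ℝ) (h0 : 0 ≤ α) (h1 : α < β) (h2 : β ≤ 1) :
    |(((Finset.range N).filter fun i => α ≤ x i ∧ x i < β).card : ℝ) - N * (β - α)|
      ≤ N * disc N x := by
  have hN' : (0 : ℝ) < N := by exact_mod_cast hN
  have h := le_ciSup (disc_bdd N hN x) ⟨(α, β), h0, h1, h2⟩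
  have h' := mul_le_mul_of_nonneg_left h hN'.le
  refine le_trans (le_of_eq ?_) h'
  dsimp only
  rw [← abs_of_pos hN', ← abs_mul, abs_of_pos hN']
  congr 1
  field_simp

lemma disc_upper (x : ℕ → ℝ) (Y : ℕ → ℕ) (B N : ℕ) (hB : 0 < B) (hN : 1 ≤ N) (τ : ℝ)
    (hτ0 : 0 ≤ τ) (hτ1 : τ ≤ 1)
    (hx : ∀ m < N, x m = ((Y m : ℝ) + τ) / B) (K : ℝ)
    (hK : ∀ u ≤ B, ∀ v ≤ B, ee Y B N v - ee Y B N u + N / B ≤ K) :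
    N * disc N x ≤ K := by
  have hN' : (0 : ℝ) < N := by exact_mod_cast hN
  have hB' : (0 : ℝ) < B := by exact_mod_cast hB
  haveI : Nonempty {p : ℝ × ℝ // 0 ≤ p.1 ∧ p.1 < p.2 ∧ p.2 ≤ 1} := ⟨⟨(0, 1), by norm_num⟩⟩
  have : disc N x ≤ K / N := by
    apply ciSup_le
    rintro ⟨⟨α, β⟩, h0, h1, h2⟩
    dsimp only at *
    have hd := dev_eq x Y B N hB τ hx α β h1 _ _ rfl rfl
    have key : ∀ t : ℝ, 0 ≤ t → t ≤ 1 → (⌈t * B - τ⌉₊ ≤ B) ∧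
        0 ≤ ((⌈t * B - τ⌉₊ : ℕ) : ℝ) - (t * B - τ) ∧
        ((⌈t * B - τ⌉₊ : ℕ) : ℝ) - (t * B - τ) ≤ 1 := by
      intro t ht0 ht1
      refine ⟨?_, ?_, ?_⟩
      · rw [Nat.ceil_le]; nlinarith
      · have := Nat.le_ceil (t * B - τ); linarith
      · by_cases hh : 0 ≤ t * B - τ
        · have := Nat.ceil_lt_add_one hh; linarith
        · rw [Nat.ceil_eq_zero.2 (by linarith)]
          have : 0 ≤ t * B := by positivity
          push_cast; linarith
    obtain ⟨k1, k2, k3⟩ := key α h0 (by linarith)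
    obtain ⟨k4, k5, k6⟩ := key β (by linarith) h2
    have q1 := hK _ k1 _ k4
    have q2 := hK _ k4 _ k1
    have hq : (0 : ℝ) < N / B := by positivity
    generalize hu : ((⌈α * B - τ⌉₊ : ℕ) : ℝ) - (α * B - τ) = du at *
    generalize hv : ((⌈β * B - τ⌉₊ : ℕ) : ℝ) - (β * B - τ) = dv at *
    rw [le_div_iff₀ hN', ← abs_of_pos hN', ← abs_mul, abs_of_pos hN']
    have e : ((((Finset.range N).filter fun i => α ≤ x i ∧ x i < β).card : ℝ) / N - (β - α)) * N
      = (((Finset.range N).filter fun i => α ≤ x i ∧ x i < β).card : ℝ) - N * (β - α) := by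
      field_simp
    rw [e, hd, abs_le]
    constructor <;> nlinarith
  rw [le_div_iff₀ hN'] at this
  linarith

lemma disc_lower (x : ℕ → ℝ) (Y : ℕ → ℕ) (B N : ℕ) (hB : 0 < B) (hN : 1 ≤ N) (τ : ℝ)
    (hτ0 : 0 ≤ τ) (hτ1 : τ ≤ 1)
    (hx : ∀ m < N, x m = ((Y m : ℝ) + τ) / B) 
    (h0B : ee Y B N 0 = ee Y B N B) (u v : ℕ) (hu : u ≤ B) (hv : v ≤ B) :
    ee Y B N v - ee Y B N u + N / B ≤ N * disc N x := by
  have hN' : (0 : ℝ) < N := by exact_mod_cast hN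
  have hB' : (0 : ℝ) < B := by exact_mod_cast hB
  have hq : (0 : ℝ) < N / B := by positivity
  wlog hu1 : u < B generalizing u
  · have : u = B := by omega
    subst this
    rw [← h0B]
    exact this 0 (by omega) hB
  wlog hv1 : 1 ≤ v generalizing v
  · have : v = 0 := by omega
    subst this
    rw [h0B]
    exact this B le_rfl hB
  have hu1' : (u : ℝ) + 1 ≤ B := by exact_mod_cast hu1
  have hv1' : (1 : ℝ) ≤ v := by exact_mod_cast hv1
  have hv' : (v : ℝ) ≤ B := by exact_mod_cast hv
  have cu : ∀ u : ℕ, ⌈((u : ℝ) + τ) / B * B - τ⌉₊ = u := by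
    intro u
    rw [div_mul_cancel₀ _ hB'.ne']
    simp
  have cv : ∀ s : ℝ, 0 < s → s < 1 → ⌈((v : ℝ) - 1 + τ + s) / B * B - τ⌉₊ = v := by
    intro s h1 h2
    rw [div_mul_cancel₀ _ hB'.ne', Nat.ceil_eq_iff (by omega), Nat.cast_sub hv1]
    push_cast
    constructor <;> linarith
  have lim : (∃ s0 : ℝ, 0 < s0 ∧ ∀ s : ℝ, 0 < s → s < s0 → s < 1 → 
      ee Y B N v - ee Y B N u + N / B * (1 - s) ≤ N * disc N x) →
      ee Y B N v - ee Y B N u + N / B ≤ N * disc N x := by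
    rintro ⟨s0, hs0, h⟩
    apply le_of_forall_pos_le_add
    intro ε hε
    have hm : 0 < min (min (s0 / 2) (1 / 2)) (ε / (N / B)) := by positivity
    have h1 := min_le_left (min (s0 / 2) (1 / 2)) (ε / (N / B))
    have h2 := min_le_right (min (s0 / 2) (1 / 2)) (ε / (N / B : ℝ))
    have h3 := min_le_left (s0 / 2) (1 / 2)
    have h4 := min_le_right (s0 / 2) (1 / 2)
    have := h _ hm (by linarith) (by linarith)
    rw [le_div_iff₀ hq] at h2
    linarith
  rcases lt_or_ge u v with huv | huv
  · have huv' : (u : ℝ) + 1 ≤ v := by exact_mod_cast huv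
    by_cases hc : (v : ℝ) - 1 + τ < B
    · apply lim
      refine ⟨B - (v - 1 + τ), by linarith, fun s hs hs0 hs1 => ?_⟩
      have hab : ((u : ℝ) + τ) / B < ((v : ℝ) - 1 + τ + s) / B := by
        gcongr ?_ / _; linarith
      have hd := dev_eq x Y B N hB τ hx _ _ hab u v (cu u) (cv s hs hs1)
      have hl := le_disc N hN x (((u : ℝ) + τ) / B) (((v : ℝ) - 1 + τ + s) / B) (by positivity) hab
        (by rw [div_le_one hB']; linarith)
      rw [hd, div_mul_cancel₀ _ hB'.ne', div_mul_cancel₀ _ hB'.ne'] at hl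
      refine le_trans (le_of_eq ?_) ((le_abs_self _).trans hl)
      ring
    · have hτ : τ = 1 := by linarith
      have hvB : v = B := by
        have : (B : ℝ) ≤ v := by linarith
        have : B ≤ v := by exact_mod_cast this
        omega
      subst hvB
      rw [← h0B]
      have hab : (0 : ℝ) < ((u : ℝ) + τ) / v := by rw [hτ]; positivity
      have hd := dev_eq x Y v N hB τ hx _ _ hab 0 u 
        (by rw [Nat.ceil_eq_zero]; linarith) (cu u)
      have hl := le_disc N hN x 0 (((u : ℝ) + τ) / v) le_rfl hab
        (by rw [div_le_one hB']; linarith)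
      rw [hd, div_mul_cancel₀ _ hB'.ne', hτ] at hl
      refine le_trans (le_of_eq ?_) ((neg_le_abs _).trans hl)
      push_cast
      ring
  · have huv' : (v : ℝ) ≤ u := by exact_mod_cast huv
    apply lim
    refine ⟨1, one_pos, fun s hs _ hs1 => ?_⟩
    have hab : ((v : ℝ) - 1 + τ + s) / B < ((u : ℝ) + τ) / B := by
      gcongr ?_ / _; linarith
    have hd := dev_eq x Y B N hB τ hx _ _ hab v u (cv s hs hs1) (cu u)
    have hl := le_disc N hN x (((v : ℝ) - 1 + τ + s) / B) (((u : ℝ) + τ) / B)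
      (div_nonneg (by linarith) hB'.le) hab
      (by rw [div_le_one hB']; linarith)
    rw [hd, div_mul_cancel₀ _ hB'.ne', div_mul_cancel₀ _ hB'.ne'] at hl
    refine le_trans (le_of_eq ?_) ((neg_le_abs _).trans hl)
    ring

/-! Combinatorial part -/

lemma Yv_lt (b : ℕ) (σ : ℕ → ℕ) (hσ : ∀ i < b, σ i < b) (hb : 0 < b) (n m : ℕ) :
    Yv b σ n m < b ^ n := by
  induction n with
  | zero => simp [Yv]
  | succ k ih =>
    rw [Yv, pow_succ]
    have := hσ _ (Nat.mod_lt (m / b ^ k) hb)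
    nlinarith

lemma Yv_add (b : ℕ) (σ : ℕ → ℕ) (hb : 0 < b) (n k m q : ℕ) (hk : k ≤ n) :
    Yv b σ k (b ^ n * q + m) = Yv b σ k m := by
  induction k with
  | zero => simp [Yv]
  | succ k ih =>
    rw [Yv, Yv, ih (by omega)]
    congr 2
    obtain ⟨d, rfl⟩ := Nat.exists_eq_add_of_le hk
    have : b ^ (k + 1 + d) * q + m = m + b ^ k * (b * (b ^ d * q)) := by ring
    rw [this, Nat.add_mul_div_left _ _ (by positivity), Nat.add_mul_mod_self_left]

lemma cnt_rec (b : ℕ) (σ : ℕ → ℕ) (hσ : ∀ i < b, σ i < b) (hb : 0 < b) (n μ ε Q R : ℕ)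
    (hε : ε < b) (hQ : Q ≤ b) (hR : R ≤ b ^ n) (hQR : Q < b ∨ R = 0) :
    cnt (Yv b σ (n + 1)) (b ^ n * Q + R) (b * μ + ε) =
      ∑ q ∈ Finset.range Q, cnt (Yv b σ n) (b ^ n) (μ + if σ q < ε then 1 else 0)
      + cnt (Yv b σ n) R (μ + if σ Q < ε then 1 else 0) := by
  have blk : ∀ q R, R ≤ b ^ n → (q < b ∨ R = 0) → 
      ∑ m ∈ Finset.range R, (if Yv b σ (n + 1) (b ^ n * q + m) < b * μ + ε then (1 : ℝ) else 0)
      = cnt (Yv b σ n) R (μ + if σ q < ε then 1 else 0) := by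
    intro q R hR hq
    rw [cnt]
    apply Finset.sum_congr rfl
    intro m hm
    have hm := Finset.mem_range.1 hm
    have hq : q < b := by omega
    rw [Yv, Yv_add b σ hb n n m q le_rfl]
    have : (b ^ n * q + m) / b ^ n % b = q := by
      rw [add_comm, Nat.add_mul_div_left _ _ (by positivity), Nat.div_eq_of_lt (by omega), zero_add,
        Nat.mod_eq_of_lt hq]
    rw [this]
    have hs := hσ q hq
    congr 1
    apply propext
    generalize Yv b σ n m = y
    rcases lt_trichotomy y μ with h | h | h
    · have : b * y + b ≤ b * μ := by nlinarith
      constructor <;> intro _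
      · split_ifs <;> omega
      · omega
    · subst h
      split_ifs <;> omega
    · have : b * μ + b ≤ b * y := by nlinarith
      constructor <;> intro h2
      · omega
      · split_ifs at h2 <;> omega
  rw [cnt, Finset.sum_range_add, blk Q R hR hQR]
  congr 1
  clear hQR
  induction Q with
  | zero => simp
  | succ Q ih =>
    rw [Finset.sum_range_succ, mul_add, mul_one, Finset.sum_range_add, ih (by omega),
      blk Q _ le_rfl (by omega)]

lemma sum_perm (b : ℕ) (σ : ℕ → ℕ) (hσ : Set.BijOn σ (Set.Iio b) (Set.Iio b)) (ε : ℕ) (hε : ε ≤ b) :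
    ∑ q ∈ Finset.range b, (if σ q < ε then (1 : ℝ) else 0) = ε := by
  have : ∑ q ∈ Finset.range b, (if σ q < ε then (1 : ℝ) else 0)
      = ∑ q ∈ Finset.range b, (if q < ε then (1 : ℝ) else 0) := by
    apply Finset.sum_bij (fun q _ => σ q)
    · intro q hq; simpa using hσ.mapsTo (by simpa using hq)
    · intro q hq r hr h
      exact hσ.injOn (by simpa using hq) (by simpa using hr) h
    · intro q hq
      obtain ⟨r, hr, h⟩ := hσ.surjOn (show q ∈ Set.Iio b by simpa using hq)
      exact ⟨r, by simpa using hr, h⟩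
    · intros; rfl
  rw [this, Finset.sum_boole]
  have : (Finset.range b).filter (fun q => q < ε) = Finset.range ε := by
    ext q; simp; omega
  rw [this]; simp

lemma cnt_full (b : ℕ) (σ : ℕ → ℕ) (hσ : Set.BijOn σ (Set.Iio b) (Set.Iio b)) (hb : 0 < b) (n l : ℕ)
    (hl : l ≤ b ^ n) : cnt (Yv b σ n) (b ^ n) l = l := by
  induction n generalizing l with
  | zero =>
    have : l = 0 ∨ l = 1 := by simp at hl; omega
    rcases this with rfl | rfl <;> simp [cnt, Yv]
  | succ n ih =>
    have h := cnt_rec b σ (fun i hi => hσ.mapsTo hi) hb n (l / b) (l % b) b 0 (Nat.mod_lt _ hb)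
      le_rfl (by simp) (Or.inr rfl)
    rw [Nat.div_add_mod, add_zero, ← pow_succ] at h
    rw [h]
    have h1 : ∀ q ∈ Finset.range b, cnt (Yv b σ n) (b ^ n) (l / b + if σ q < l % b then 1 else 0)
        = ((l / b : ℕ) : ℝ) + if σ q < l % b then 1 else 0 := by
      intro q _
      rw [ih]
      · push_cast; rfl
      · have hd := Nat.div_add_mod l b
        rw [pow_succ] at hl
        split_ifs with hh
        · have : l / b < b ^ n := by
            by_contra hc
            push Not at hc
            nlinarith
          omega
        · rw [add_zero]
          exact Nat.div_le_of_le_mul (by linarith)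
    rw [Finset.sum_congr rfl h1, Finset.sum_add_distrib, sum_perm b σ hσ _ (Nat.mod_lt _ hb).le]
    simp only [cnt, Finset.range_zero, Finset.sum_empty, Finset.sum_const, Finset.card_range, add_zero,
      nsmul_eq_mul]
    exact_mod_cast Nat.div_add_mod l b

lemma ee_ends (b : ℕ) (σ : ℕ → ℕ) (hσ : ∀ i < b, σ i < b) (hb : 0 < b) (n R : ℕ) :
    ee (Yv b σ n) (b ^ n) R 0 = ee (Yv b σ n) (b ^ n) R (b ^ n) := by
  have hB' : ((b ^ n : ℕ) : ℝ) ≠ 0 := by positivity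
  rw [ee, ee, cnt, cnt]
  simp only [Yv_lt b σ hσ hb]
  rw [mul_div_cancel_left₀ _ hB']
  simp

/-- weight of the digit `q`. -/
noncomputable def phi (b : ℕ) (σ : ℕ → ℕ) (Q : ℕ) (ρ : ℝ) (ε : ℕ) : ℝ :=
  ∑ q ∈ Finset.range Q, ((if σ q < ε then (1 : ℝ) else 0) - ε / b)
    + ρ * ((if σ Q < ε then (1 : ℝ) else 0) - ε / b)

lemma ee_rec (b : ℕ) (σ : ℕ → ℕ) (hσ : Set.BijOn σ (Set.Iio b) (Set.Iio b)) (hb : 0 < b)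
    (n μ ε Q R : ℕ) (hμ : μ < b ^ n) (hε : ε < b) (hQ : Q < b) (hR : R ≤ b ^ n) :
    ee (Yv b σ (n + 1)) (b ^ (n + 1)) (b ^ n * Q + R) (b * μ + ε) =
      ee (Yv b σ n) (b ^ n) R (μ + if σ Q < ε then 1 else 0)
      + phi b σ Q ((R : ℝ) / (b ^ n : ℕ)) ε := by
  have hb' : (b : ℝ) ≠ 0 := by positivity
  rw [ee, ee, cnt_rec b σ (fun i hi => hσ.mapsTo hi) hb n μ ε Q R hε hQ.le hR (Or.inl hQ)]
  have h1 : ∀ q ∈ Finset.range Q, cnt (Yv b σ n) (b ^ n) (μ + if σ q < ε then 1 else 0)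
      = (μ : ℝ) + if σ q < ε then 1 else 0 := by
    intro q _
    rw [cnt_full b σ hσ hb]
    · push_cast; rfl
    · split_ifs <;> omega
  rw [Finset.sum_congr rfl h1, Finset.sum_add_distrib, phi, Finset.sum_sub_distrib]
  simp only [Finset.sum_const, Finset.card_range, nsmul_eq_mul]
  push_cast
  rw [pow_succ]
  field_simp
  ring

lemma phi_shift (b : ℕ) (σ : ℕ → ℕ) (hσ : ∀ i < b, σ i < b) (hb : 0 < b) (a : ℕ) (hab : a < b)
    (Q : ℕ) (hQ : Q < b) (ρ : ℝ) :
    ∃ c, ∀ ε < b, phi b (fun x => (σ x + a) % b) Q ρ ((ε + a) % b) = phi b σ Q ρ ε + c := by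
  have hb' : (b : ℝ) ≠ 0 := by positivity
  have key : ∀ ε < b, ∀ q < b, ((if (σ q + a) % b < (ε + a) % b then (1 : ℝ) else 0)
      - ((ε + a) % b : ℕ) / b) = ((if σ q < ε then (1 : ℝ) else 0) - ε / b)
        + ((if b ≤ σ q + a then (1 : ℝ) else 0) - a / b) := by
    intro ε hε q hq
    have hs := hσ q hq
    generalize σ q = s at *
    have hmod : ∀ t < b, (t + a) % b = if b ≤ t + a then t + a - b else t + a := by
      intro t ht
      split_ifs with h
      · rw [Nat.mod_eq_sub_mod h, Nat.mod_eq_of_lt (by omega)]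
      · exact Nat.mod_eq_of_lt (by omega)
    rw [hmod s hs, hmod ε hε]
    by_cases h1 : b ≤ s + a <;> by_cases h2 : b ≤ ε + a <;> simp only [h1, h2, if_true, if_false]
    · rw [Nat.cast_sub h2]
      push_cast
      have : (s + a - b < ε + a - b) ↔ s < ε := by omega
      simp only [this]
      field_simp
      ring
    · rw [if_pos (by omega), if_neg (by omega)]
      push_cast
      ring
    · rw [if_neg (by omega), if_pos (by omega), Nat.cast_sub h2]
      push_cast
      field_simp
      ring
    · have : (s + a < ε + a) ↔ s < ε := by omega
      simp only [this]
      push_cast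
      ring
  refine ⟨∑ q ∈ Finset.range Q, ((if b ≤ σ q + a then (1 : ℝ) else 0) - a / b)
    + ρ * ((if b ≤ σ Q + a then (1 : ℝ) else 0) - a / b), fun ε hε => ?_⟩
  rw [phi, phi]
  rw [Finset.sum_congr rfl (fun q hq => key ε hε q ((Finset.mem_range.1 hq).trans hQ)),
    key ε hε Q hQ, Finset.sum_add_distrib]
  ring

lemma shift_bij (b : ℕ) (σ : ℕ → ℕ) (hσ : Set.BijOn σ (Set.Iio b) (Set.Iio b)) (a : ℕ)
    (hb : 0 < b) :
    Set.BijOn (fun x => (σ x + a) % b) (Set.Iio b) (Set.Iio b) := by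
  have h1 : Set.MapsTo (fun x => (σ x + a) % b) (Set.Iio b) (Set.Iio b) :=
    fun x _ => Nat.mod_lt _ hb
  have h2 : Set.InjOn (fun x => (σ x + a) % b) (Set.Iio b) := by
    intro x hx y hy h
    apply hσ.injOn hx hy
    have h3 : σ x + a ≡ σ y + a [MOD b] := h
    exact Nat.ModEq.eq_of_lt_of_lt (Nat.ModEq.add_right_cancel' a h3) (hσ.mapsTo hx) (hσ.mapsTo hy)
  refine ⟨h1, h2, ?_⟩
  have h4 := Finset.surjOn_of_injOn_of_card_le (s := Finset.range b) (t := Finset.range b)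
    (fun x => (σ x + a) % b) (by simpa [Set.MapsTo] using h1) (by simpa [Set.InjOn] using h2) le_rfl
  simpa using h4

lemma main_shift (b : ℕ) (σ : ℕ → ℕ) (hσ : Set.BijOn σ (Set.Iio b) (Set.Iio b)) (hb : 0 < b)
    (a : ℕ) (hab : a < b) (n N : ℕ) (hN : N < b ^ n) :
    ∃ c, ∀ l ≤ b ^ n, ∃ l' ≤ b ^ n, ee (Yv b (fun x => (σ x + a) % b) n) (b ^ n) N l'
      = ee (Yv b σ n) (b ^ n) N l + c := by
  have hσ' := shift_bij b σ hσ a hb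
  induction n generalizing N with
  | zero =>
    refine ⟨0, fun l hl => ⟨l, hl, ?_⟩⟩
    have : N = 0 := by simpa using hN
    subst this
    simp [ee, cnt]
  | succ n ih =>
    have hB : 0 < b ^ n := by positivity
    have hR : N % b ^ n < b ^ n := Nat.mod_lt _ hB
    have hQ : N / b ^ n < b := Nat.div_lt_of_lt_mul (by rwa [← pow_succ])
    have hNe : b ^ n * (N / b ^ n) + N % b ^ n = N := Nat.div_add_mod _ _
    generalize N / b ^ n = Q at *
    generalize N % b ^ n = R at *
    subst hNe
    obtain ⟨c, hc⟩ := ih R hR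
    obtain ⟨d, hd⟩ := phi_shift b σ (fun i hi => hσ.mapsTo hi) hb a hab Q hQ
      ((R : ℝ) / (b ^ n : ℕ))
    refine ⟨c + d, fun l hl => ?_⟩
    wlog hl1 : l < b ^ (n + 1) generalizing l
    · have : l = b ^ (n + 1) := by omega
      subst this
      rw [← ee_ends b σ (fun i hi => hσ.mapsTo hi) hb]
      exact this 0 (by positivity) (by positivity)
    have hε : l % b < b := Nat.mod_lt _ hb
    have hμ : l / b < b ^ n := Nat.div_lt_of_lt_mul (by rwa [mul_comm, ← pow_succ])
    have hle : b * (l / b) + l % b = l := Nat.div_add_mod _ _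
    generalize l / b = μ at *
    generalize l % b = ε at *
    subst hle
    obtain ⟨ν, hν, hνe⟩ := hc (μ + if σ Q < ε then 1 else 0) (by split_ifs <;> omega)
    have hends := ee_ends b _ (fun i hi => hσ'.mapsTo hi) hb n R
    have : ∃ μ' < b ^ n, ee (Yv b (fun x => (σ x + a) % b) n) (b ^ n) R
        (μ' + if (σ Q + a) % b < (ε + a) % b then 1 else 0)
        = ee (Yv b (fun x => (σ x + a) % b) n) (b ^ n) R ν := by
      split_ifs with hh
      · rcases Nat.eq_zero_or_pos ν with h | h
        · subst h
          refine ⟨b ^ n - 1, by omega, ?_⟩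
          rw [hends, Nat.sub_add_cancel hB]
        · exact ⟨ν - 1, by omega, by rw [Nat.sub_add_cancel h]⟩
      · rcases hν.lt_or_eq with h | h
        · exact ⟨ν, h, rfl⟩
        · subst h
          exact ⟨0, hB, by rw [← hends]⟩
    obtain ⟨μ', hμ', hμe⟩ := this
    have hε' : (ε + a) % b < b := Nat.mod_lt _ hb
    refine ⟨b * μ' + (ε + a) % b, ?_, ?_⟩
    · rw [pow_succ]; nlinarith
    · rw [ee_rec b σ hσ hb n μ ε Q R hμ hε hQ hR.le,
        ee_rec b _ hσ' hb n μ' _ Q R hμ' hε' hQ hR.le, hμe, hνe, hd ε hε]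
      ring

lemma Yv_sum (b : ℕ) (σ : ℕ → ℕ) (hb : 0 < b) (n m : ℕ) :
    ∑ j ∈ Finset.range n, (σ (m / b ^ j % b) : ℝ) / b ^ (j + 1) = (Yv b σ n m : ℝ) / (b ^ n : ℕ) := by
  have hb' : (b : ℝ) ≠ 0 := by positivity
  induction n with
  | zero => simp [Yv]
  | succ n ih =>
    rw [Finset.sum_range_succ, ih, Yv]
    push_cast
    rw [pow_succ]
    field_simp

lemma Sperm_eq (b : ℕ) (hb : 2 ≤ b) (σ : ℕ → ℕ) (n m : ℕ) (hm : m < b ^ n) :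
    Sperm b σ m = ((Yv b σ n m : ℝ) + (σ 0 : ℝ) / (b - 1)) / (b ^ n : ℕ) := by
  have hb2 : (2 : ℝ) ≤ b := by exact_mod_cast hb
  have hb' : (b : ℝ) ≠ 0 := by positivity
  have hb1 : (b : ℝ) - 1 ≠ 0 := by linarith
  have tail : HasSum (fun j => (σ (m / b ^ (j + n) % b) : ℝ) / b ^ (j + n + 1))
      ((σ 0 : ℝ) / (b - 1) / (b ^ n : ℕ)) := by
    have g := (hasSum_geometric_of_lt_one (r := (b : ℝ)⁻¹) (by positivity)
      (inv_lt_one_of_one_lt₀ (by linarith))).mul_left ((σ 0 : ℝ) / b ^ (n + 1))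
    have g1 : (fun j => (σ (m / b ^ (j + n) % b) : ℝ) / b ^ (j + n + 1))
        = fun i => (σ 0 : ℝ) / b ^ (n + 1) * (b : ℝ)⁻¹ ^ i := by
      funext j
      have : m / b ^ (j + n) = 0 := Nat.div_eq_of_lt (hm.trans_le (Nat.pow_le_pow_right (by omega) (by omega)))
      rw [this, Nat.zero_mod, inv_pow, show j + n + 1 = (n + 1) + j by ring, pow_add _ (n + 1) j]
      field_simp
    have g2 : (σ 0 : ℝ) / (b - 1) / (b ^ n : ℕ) = (σ 0 : ℝ) / b ^ (n + 1) * (1 - (b : ℝ)⁻¹)⁻¹ := by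
      push_cast
      rw [pow_succ]
      have : (1 : ℝ) - (b : ℝ)⁻¹ = (b - 1) / b := by field_simp
      rw [this]
      field_simp
    rw [g1, g2]
    exact g
  have h := (hasSum_nat_add_iff n (f := fun j => (σ (m / b ^ j % b) : ℝ) / b ^ (j + 1))).1 tail
  rw [Sperm, h.tsum_eq, Yv_sum b σ (by omega)]
  ring

lemma disc_le (b : ℕ) (hb : 2 ≤ b) (σ : ℕ → ℕ)
    (hσ : Set.BijOn σ (Set.Iio b) (Set.Iio b)) (a : ℕ) (hab : a < b)
    (N : ℕ) (hN : 1 ≤ N) :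
    disc N (Sperm b σ) ≤ disc N (Sperm b fun x => (σ x + a) % b) := by
  have hb0 : 0 < b := by omega
  have hσ' := shift_bij b σ hσ a hb0
  have hb2 : (2 : ℝ) ≤ b := by exact_mod_cast hb
  have hN' : (0 : ℝ) < N := by exact_mod_cast hN
  have hNb : N < b ^ N := Nat.lt_pow_self (by omega)
  have t : ∀ s : ℕ, s < b → 0 ≤ (s : ℝ) / (b - 1) ∧ (s : ℝ) / (b - 1) ≤ 1 := by
    intro s hs
    have hs' : (s : ℝ) + 1 ≤ b := by exact_mod_cast hs
    refine ⟨div_nonneg (by positivity) (by linarith), ?_⟩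
    rw [div_le_one (by linarith)]; linarith
  obtain ⟨t0, t1⟩ := t (σ 0) (hσ.mapsTo hb0)
  obtain ⟨t2, t3⟩ := t ((σ 0 + a) % b) (Nat.mod_lt _ hb0)
  obtain ⟨c, hc⟩ := main_shift b σ hσ hb0 a hab N N hNb
  have hB : 0 < b ^ N := by positivity
  refine le_of_mul_le_mul_left ?_ hN'
  refine disc_upper _ (Yv b σ N) (b ^ N) N hB hN _ t0 t1
    (fun m hm => Sperm_eq b hb σ N m (hm.trans hNb)) _ ?_
  intro u hu v hv
  obtain ⟨u', hu', e1⟩ := hc u hu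
  obtain ⟨v', hv', e2⟩ := hc v hv
  have := disc_lower _ (Yv b (fun x => (σ x + a) % b) N) (b ^ N) N hB hN _ t2 t3
    (fun m hm => Sperm_eq b hb (fun x => (σ x + a) % b) N m (hm.trans hNb))
    (ee_ends b _ (fun i hi => hσ'.mapsTo hi) hb0 N N) u' v' hu' hv'
  rw [e1, e2] at this
  linarith

theorem symmetry_lemma_shift (b : ℕ) (hb : 2 ≤ b) (σ : ℕ → ℕ)
    (hσ : Set.BijOn σ (Set.Iio b) (Set.Iio b)) (a : ℕ) (ha1 : 1 ≤ a) (hab : a < b)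
    (N : ℕ) (hN : 1 ≤ N) :
    disc N (Sperm b σ) = disc N (Sperm b fun x => (σ x + a) % b) := by
  have hb0 : 0 < b := by omega
  apply le_antisymm (disc_le b hb σ hσ a hab N hN)
  have h := disc_le b hb _ (shift_bij b σ hσ a hb0) (b - a) (by omega) N hN
  have e : (Sperm b fun x => ((σ x + a) % b + (b - a)) % b) = Sperm b σ := by
    funext m
    rw [Sperm, Sperm]
    congr 1
    funext j
    have hs : σ (m / b ^ j % b) < b := hσ.mapsTo (Nat.mod_lt _ hb0)
    congr 2
    rw [Nat.mod_add_mod, show σ (m / b ^ j % b) + a + (b - a) = σ (m / b ^ j % b) + b by omega,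
      Nat.add_mod_right, Nat.mod_eq_of_lt hs]
  rwa [e] at h
end

section
/- For b ≥ 2 and σ a permutation of {0,...,b-1}, let σ''(x) = -σ(x) mod b. Then for all N ≥ 1, D_N(S_b^σ) = D_N(S_b^{σ''}), where D_N denotes the extreme discrepancy of the first N points of the permuted van der Corput sequence. -/
open scoped Classical

def TT (b : ℕ) (σ : ℕ → ℕ) : ℕ → ℕ → ℕ
  | 0, _ => 0
  | n+1, i => b * TT b σ n i + σ (i / b ^ n % b)

noncomputable def FF (b : ℕ) (σ : ℕ → ℕ) (N n h : ℕ) : ℝ :=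
  (((Finset.range N).filter fun i => TT b σ n i < h).card : ℝ) - N * h / (b:ℝ) ^ n

noncomputable def EE (N : ℕ) (x : ℕ → ℝ) (t : ℝ) : ℝ :=
  (((Finset.range N).filter fun i => x i < t).card : ℝ) - N * t

noncomputable def KK (b : ℕ) (σ : ℕ → ℕ) (M h : ℕ) : ℝ :=
  (((Finset.range M).filter fun m => σ (m % b) < h).card : ℝ)

noncomputable def ph (b : ℕ) (σ : ℕ → ℕ) (N n h : ℕ) : ℝ :=
  KK b σ (N / b ^ n) h
    + (if σ ((N / b ^ n) % b) < h then ((N:ℝ) / b ^ n - (N / b ^ n : ℕ)) else 0)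
    - N * h / (b:ℝ) ^ (n+1)

lemma TT_lt {b : ℕ} (hb : 2 ≤ b) {σ : ℕ → ℕ} (hs : ∀ d < b, σ d < b) (n i : ℕ) :
    TT b σ n i < b ^ n := by
  induction n with
  | zero => simp [TT]
  | succ n ih =>
    have := hs (i / b ^ n % b) (Nat.mod_lt _ (by omega))
    simp only [TT, pow_succ]
    nlinarith

lemma TT_inj {b : ℕ} (hb : 2 ≤ b) {σ : ℕ → ℕ} (hs : ∀ d < b, σ d < b)
    (hi : ∀ c < b, ∀ d < b, σ c = σ d → c = d) (n i j : ℕ) :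
    TT b σ n i = TT b σ n j ↔ i % b ^ n = j % b ^ n := by
  induction n with
  | zero => simp [TT, Nat.mod_one]
  | succ n ih =>
    have h1 := Nat.mod_lt (i / b ^ n) (show 0 < b by omega)
    have h2 := Nat.mod_lt (j / b ^ n) (show 0 < b by omega)
    have h3 := hs _ h1
    have h4 := hs _ h2
    have hB : 0 < b ^ n := by positivity
    have h5 := Nat.mod_lt i hB
    have h6 := Nat.mod_lt j hB
    simp only [TT]
    rw [Nat.mod_pow_succ, Nat.mod_pow_succ]
    constructor
    · intro h
      have e1 : TT b σ n i = TT b σ n j := by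
        have := congrArg (· / b) h
        simpa [Nat.mul_add_div (show 0 < b by omega), Nat.div_eq_of_lt h3,
          Nat.div_eq_of_lt h4] using this
      have e2 := hi _ h1 _ h2 (by rw [e1] at h; omega)
      rw [ih.1 e1, e2]
    · intro h
      have e1 : i % b ^ n = j % b ^ n := by
        have := congrArg (· % b ^ n) h
        simpa using this
      have e2 : i / b ^ n % b = j / b ^ n % b := by
        rw [e1] at h
        exact Nat.eq_of_mul_eq_mul_left hB (by omega)
      rw [ih.2 e1, e2]

lemma TT_surj {b : ℕ} (hb : 2 ≤ b) {σ : ℕ → ℕ} (hs : ∀ d < b, σ d < b)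
    (hi : ∀ c < b, ∀ d < b, σ c = σ d → c = d) (n h : ℕ) (hh : h < b ^ n) :
    ∃ r < b ^ n, TT b σ n r = h := by
  have := Finset.surj_on_of_inj_on_of_card_le (s := Finset.range (b^n)) (t := Finset.range (b^n))
    (fun i _ => TT b σ n i) (fun i _ => Finset.mem_range.2 (TT_lt hb hs n i))
    (fun i j h1 h2 h => by
      have := (TT_inj hb hs hi n i j).1 h
      rwa [Nat.mod_eq_of_lt (Finset.mem_range.1 h1), Nat.mod_eq_of_lt (Finset.mem_range.1 h2)] at this)
    le_rfl h (Finset.mem_range.2 hh)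
  obtain ⟨r, hr, e⟩ := this
  exact ⟨r, Finset.mem_range.1 hr, e.symm⟩

lemma count {b : ℕ} (hb : 2 ≤ b) {σ : ℕ → ℕ} (hs : ∀ d < b, σ d < b)
    (hi : ∀ c < b, ∀ d < b, σ c = σ d → c = d) (N n h : ℕ) (hh : h < b ^ n) :
    ∃ Q, (Q = N / b ^ n ∨ Q = N / b ^ n + 1) ∧ ∀ (p : ℕ → Prop) [DecidablePred p],
      ((Finset.range N).filter fun i => TT b σ n i = h ∧ p (i / b ^ n)).card
        = ((Finset.range Q).filter fun m => p m).card := by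
  obtain ⟨r, hr, e⟩ := TT_surj hb hs hi n h hh
  have hB : 0 < b ^ n := by positivity
  have hN := Nat.div_add_mod N (b ^ n)
  have hR := Nat.mod_lt N hB
  have key : ∃ Q, (Q = N / b ^ n ∨ Q = N / b ^ n + 1) ∧ ∀ m, r + b ^ n * m < N ↔ m < Q := by
    generalize b ^ n = B at *
    generalize N / B = M at *
    generalize N % B = R at *
    subst hN
    by_cases hc : r < R
    · refine ⟨M + 1, Or.inr rfl, fun m => ⟨fun h => ?_, fun h => ?_⟩⟩
      · by_contra h'
        push Not at h'
        nlinarith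
      · have : B * m ≤ B * M := Nat.mul_le_mul_left _ (by omega)
        omega
    · refine ⟨M, Or.inl rfl, fun m => ⟨fun h => ?_, fun h => ?_⟩⟩
      · by_contra h'
        push Not at h'
        have : B * M ≤ B * m := Nat.mul_le_mul_left _ h'
        omega
      · have : B * (m + 1) ≤ B * M := Nat.mul_le_mul_left _ (by omega)
        rw [mul_add] at this
        omega
  obtain ⟨Q, hQ, hk⟩ := key
  refine ⟨Q, hQ, fun p _ => ?_⟩
  symm
  have hT : ∀ i, TT b σ n i = h ↔ i % b ^ n = r := fun i => by
    rw [← e, TT_inj hb hs hi, Nat.mod_eq_of_lt hr]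
  have hd : ∀ m, (r + b ^ n * m) / b ^ n = m := fun m => by
    rw [Nat.add_mul_div_left _ _ hB, Nat.div_eq_of_lt hr, zero_add]
  refine Finset.card_bij (fun m _ => r + b ^ n * m) ?_ ?_ ?_
  · intro m hm
    simp only [Finset.mem_filter, Finset.mem_range] at hm ⊢
    refine ⟨(hk m).2 hm.1, (hT _).2 ?_, ?_⟩
    · rw [Nat.add_mul_mod_self_left, Nat.mod_eq_of_lt hr]
    · rw [hd]; exact hm.2
  · intro m _ m' _ hmm
    have := hd m
    rw [hmm, hd] at this
    exact this.symm
  · intro i hm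
    simp only [Finset.mem_filter, Finset.mem_range] at hm
    have h1 := (hT i).1 hm.2.1
    have h2 : r + b ^ n * (i / b ^ n) = i := by rw [← h1]; exact Nat.mod_add_div _ _
    refine ⟨i / b ^ n, ?_, h2⟩
    simp only [Finset.mem_filter, Finset.mem_range]
    exact ⟨(hk _).1 (by rw [h2]; exact hm.1), hm.2.2⟩

lemma card_split (N : ℕ) (p q r : ℕ → Prop) [DecidablePred p] [DecidablePred q]
    [DecidablePred r] (h : ∀ i, p i ↔ q i ∨ r i) (hd : ∀ i, q i → ¬ r i) :
    (((Finset.range N).filter p).card : ℝ)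
      = ((Finset.range N).filter q).card + ((Finset.range N).filter r).card := by
  rw [← Nat.cast_add, ← Finset.card_union_of_disjoint, ← Finset.filter_or]
  · congr 2
    ext i
    simp [h]
  · rw [Finset.disjoint_filter]
    intro i _
    exact hd i

lemma FF_rec {b : ℕ} (hb : 2 ≤ b) {σ : ℕ → ℕ} (hs : ∀ d < b, σ d < b)
    (hi : ∀ c < b, ∀ d < b, σ c = σ d → c = d) (N n h k : ℕ) (hh : h < b ^ n) (hk : k ≤ b) :
    FF b σ N (n+1) (b * h + k) = ph b σ N n k +
      FF b σ N n (h + if σ ((N / b ^ n) % b) < k then 1 else 0) := by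
  obtain ⟨Q, hQ, hp⟩ := count hb hs hi N n h hh
  have hb0 : (0:ℝ) < b := by positivity
  have hB : (0:ℝ) < (b:ℝ) ^ n := by positivity
  have c1 := card_split N (fun i => TT b σ (n+1) i < b * h + k) (fun i => TT b σ n i < h)
    (fun i => TT b σ n i = h ∧ σ (i / b ^ n % b) < k) (fun i => by
      have := hs (i / b ^ n % b) (Nat.mod_lt _ (by omega))
      simp only [TT]
      rcases lt_trichotomy (TT b σ n i) h with h1 | h1 | h1
      · have : b * (TT b σ n i + 1) ≤ b * h := Nat.mul_le_mul_left _ h1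
        rw [mul_add] at this
        simp only [h1, true_or, iff_true]
        omega
      · subst h1
        simp
      · have : b * (h + 1) ≤ b * TT b σ n i := Nat.mul_le_mul_left _ h1
        rw [mul_add] at this
        constructor
        · intro; omega
        · intro; omega) (fun i h1 h2 => by omega)
  have c2 := card_split N (fun i => TT b σ n i < h + 1) (fun i => TT b σ n i < h)
    (fun i => TT b σ n i = h ∧ True) (fun i => by simp; omega) (fun i h1 h2 => by omega)
  rw [hp (fun m => σ (m % b) < k)] at c1
  rw [hp (fun m => True)] at c2
  simp only [Finset.filter_true, Finset.card_range] at c2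
  have hq : ((Finset.filter (fun m => σ (m % b) < k) (Finset.range Q)).card : ℝ)
      = KK b σ (N / b ^ n) k +
        if σ ((N / b ^ n) % b) < k then ((Q:ℝ) - (N / b ^ n : ℕ)) else 0 := by
    unfold KK
    rcases hQ with rfl | rfl
    · simp
    · rw [Finset.range_add_one, Finset.filter_insert]
      split_ifs with hc
      · rw [Finset.card_insert_of_notMem (by simp)]
        push_cast; ring
      · simp
  unfold FF ph
  rw [c1, hq]
  split_ifs with hc
  · rw [c2]
    push_cast
    field_simp
    ring
  · push_cast
    field_simp
    ring_nf

lemma FF_zero (b : ℕ) (σ : ℕ → ℕ) (N n : ℕ) : FF b σ N n 0 = 0 := by simp [FF]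

lemma FF_top {b : ℕ} (hb : 2 ≤ b) {σ : ℕ → ℕ} (hs : ∀ d < b, σ d < b) (N n : ℕ) :
    FF b σ N n (b ^ n) = 0 := by
  have hb0 : (0:ℝ) < b := by positivity
  unfold FF
  rw [Finset.filter_true_of_mem (fun i _ => TT_lt hb hs n i)]
  push_cast
  field_simp
  simp

lemma ind_id (b s h : ℕ) (hs : s < b) (h1 : 1 ≤ h) (h2 : h ≤ b) (w : ℝ) :
    (if (b - s) % b < h then w else 0) =
      w - (if s < b + 1 - h then w else 0) + (if s < 1 then w else 0) := by
  rcases Nat.eq_zero_or_pos s with rfl | h0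
  · have : 0 < b + 1 - h := by omega
    have h3 : 0 < h := h1
    simp [this, h3]
  · rw [Nat.mod_eq_of_lt (by omega)]
    by_cases hc : s < b + 1 - h
    · rw [if_neg (by omega), if_pos hc, if_neg (by omega)]; ring
    · rw [if_pos (by omega), if_neg hc, if_neg (by omega)]; ring

lemma KK_eq (b : ℕ) (σ : ℕ → ℕ) (M h : ℕ) :
    KK b σ M h = ∑ m ∈ Finset.range M, if σ (m % b) < h then (1:ℝ) else 0 := by
  simp [KK]

lemma ph_neg {b : ℕ} (hb : 2 ≤ b) {σ : ℕ → ℕ} (hs : ∀ d < b, σ d < b) (N n h : ℕ)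
    (h1 : 1 ≤ h) (h2 : h ≤ b) :
    ph b (fun x => (b - σ x) % b) N n h = ph b σ N n 1 - ph b σ N n (b + 1 - h) := by
  have hb0 : (0:ℝ) < b := by positivity
  have hm : ∀ m, σ (m % b) < b := fun m => hs _ (Nat.mod_lt _ (by omega))
  have hK : KK b (fun x => (b - σ x) % b) (N / b ^ n) h
      = (N / b ^ n : ℕ) - KK b σ (N / b ^ n) (b + 1 - h) + KK b σ (N / b ^ n) 1 := by
    simp only [KK_eq]
    rw [Finset.sum_congr rfl (fun m _ => ind_id b _ h (hm m) h1 h2 1)]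
    rw [Finset.sum_add_distrib, Finset.sum_sub_distrib]
    simp
  unfold ph
  rw [hK]
  simp only
  rw [ind_id b _ h (hm _) h1 h2]
  rw [Nat.cast_sub (by omega)]
  push_cast
  field_simp
  ring

lemma main_ind {b : ℕ} (hb : 2 ≤ b) {σ : ℕ → ℕ} (hs : ∀ d < b, σ d < b)
    (hi : ∀ c < b, ∀ d < b, σ c = σ d → c = d)
    (hs' : ∀ d < b, (fun x => (b - σ x) % b) d < b)
    (hi' : ∀ c < b, ∀ d < b, (fun x => (b - σ x) % b) c = (fun x => (b - σ x) % b) d → c = d)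
    (N n : ℕ) :
    ∃ c : ℝ, ∀ h ≤ b ^ n, ∃ h' ≤ b ^ n,
      FF b (fun x => (b - σ x) % b) N n h = c - FF b σ N n h' := by
  induction n with
  | zero =>
    refine ⟨0, fun h hh => ⟨0, by simp, ?_⟩⟩
    rw [FF_zero]
    have : h = 0 ∨ h = b ^ 0 := by simp at hh ⊢; omega
    rcases this with rfl | rfl
    · simp [FF_zero]
    · rw [FF_top hb hs']; simp
  | succ n ih =>
    obtain ⟨c, hc⟩ := ih
    have hB : 0 < b ^ n := by positivity
    have pos : ∀ h ≤ b ^ (n+1), 1 ≤ h → ∃ h' ≤ b ^ (n+1),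
      FF b (fun x => (b - σ x) % b) N (n+1) h = (ph b σ N n 1 + c) - FF b σ N (n+1) h' := by
      intro h hh h1
      obtain ⟨a, k, rfl, hk1, hk2⟩ : ∃ a k, h = b * a + k ∧ 1 ≤ k ∧ k ≤ b := by
        have := Nat.div_add_mod (h-1) b
        have := Nat.mod_lt (h-1) (show 0 < b by omega)
        exact ⟨(h-1)/b, (h-1)%b+1, by omega, by omega, by omega⟩
      have ha : a < b ^ n := by
        rw [pow_succ] at hh
        by_contra h'
        push Not at h'
        nlinarith
      rw [FF_rec hb hs' hi' N n a k ha hk2, ph_neg hb hs N n k hk1 hk2]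
      obtain ⟨g, hg, e⟩ := hc (a + if (fun x => (b - σ x) % b) ((N / b ^ n) % b) < k then 1 else 0)
        (by split_ifs <;> omega)
      rw [e]
      obtain ⟨a', ha', e'⟩ : ∃ a' < b ^ n, FF b σ N n g =
          FF b σ N n (a' + if σ ((N / b ^ n) % b) < b + 1 - k then 1 else 0) := by
        split_ifs
        · by_cases hg0 : g = 0
          · refine ⟨b ^ n - 1, by omega, ?_⟩
            rw [Nat.sub_add_cancel hB, FF_top hb hs, hg0, FF_zero]
          · exact ⟨g - 1, by omega, by rw [Nat.sub_add_cancel (by omega)]⟩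
        · by_cases hg0 : g = b ^ n
          · refine ⟨0, hB, ?_⟩
            rw [hg0, FF_top hb hs, FF_zero]
          · exact ⟨g, by omega, rfl⟩
      refine ⟨b * a' + (b + 1 - k), ?_, ?_⟩
      · have : b * (a' + 1) ≤ b * b ^ n := Nat.mul_le_mul_left _ ha'
        rw [pow_succ, mul_comm (b ^ n)]
        rw [mul_add] at this
        omega
      · rw [FF_rec hb hs hi N n a' _ ha' (by omega), e']
        ring
    refine ⟨ph b σ N n 1 + c, fun h hh => ?_⟩
    rcases Nat.eq_zero_or_pos h with rfl | h0
    · obtain ⟨h', hh', e⟩ := pos (b ^ (n+1)) le_rfl (Nat.one_le_pow _ _ (by omega))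
      refine ⟨h', hh', ?_⟩
      rw [← e, FF_top hb hs', FF_zero]
    · exact pos h hh h0

lemma Sperm_sum {b : ℕ} (hb : 2 ≤ b) (σ : ℕ → ℕ) (n i : ℕ) :
    ∑ j ∈ Finset.range n, (σ (i / b ^ j % b) : ℝ) / b ^ (j + 1) = (TT b σ n i : ℝ) / b ^ n := by
  have hb0 : (0:ℝ) < b := by positivity
  induction n with
  | zero => simp [TT]
  | succ n ih =>
    rw [Finset.sum_range_succ, ih]
    simp only [TT]
    push_cast
    field_simp
    ring

lemma Sperm_bd {b : ℕ} (hb : 2 ≤ b) {σ : ℕ → ℕ} (hs : ∀ d < b, σ d < b) (n i : ℕ) :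
    (TT b σ n i : ℝ) / b ^ n ≤ Sperm b σ i ∧ Sperm b σ i ≤ ((TT b σ n i : ℝ) + 1) / b ^ n := by
  have hb0 : (0:ℝ) < b := by positivity
  have hnn : ∀ j, 0 ≤ (σ (i / b ^ j % b) : ℝ) / b ^ (j + 1) := fun j => by positivity
  have hU : Antitone (fun n => ((TT b σ n i : ℝ) + 1) / b ^ n) := by
    refine antitone_nat_of_succ_le (fun n => ?_)
    have : σ (i / b ^ n % b) + 1 ≤ b := hs (i / b ^ n % b) (Nat.mod_lt _ (by omega))
    have h' : (σ (i / b ^ n % b) : ℝ) + 1 ≤ b := by exact_mod_cast this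
    simp only [TT]
    rw [div_le_div_iff₀ (by positivity) (by positivity), pow_succ]
    push_cast
    have hB : (0:ℝ) < (b:ℝ) ^ n := by positivity
    nlinarith
  have hup : ∀ n m, ∑ j ∈ Finset.range m, (σ (i / b ^ j % b) : ℝ) / b ^ (j + 1)
      ≤ ((TT b σ n i : ℝ) + 1) / b ^ n := by
    intro n m
    calc _ ≤ ∑ j ∈ Finset.range (max m n), (σ (i / b ^ j % b) : ℝ) / b ^ (j + 1) :=
          Finset.sum_le_sum_of_subset_of_nonneg
            (Finset.range_mono (le_max_left _ _)) (fun j _ _ => hnn j)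
      _ = (TT b σ (max m n) i : ℝ) / b ^ (max m n) := Sperm_sum hb σ _ i
      _ ≤ ((TT b σ (max m n) i : ℝ) + 1) / b ^ (max m n) := by gcongr; linarith
      _ ≤ _ := hU (le_max_right _ _)
  have hsum := summable_of_sum_range_le hnn (hup 0)
  constructor
  · rw [← Sperm_sum hb]
    exact hsum.sum_le_tsum _ (fun j _ => hnn j)
  · exact Real.tsum_le_of_sum_range_le hnn (hup n)

lemma EE_diff (N : ℕ) (x : ℕ → ℝ) (α β : ℝ) (h : α ≤ β) :
    EE N x β - EE N x α =
      (((Finset.range N).filter fun i => α ≤ x i ∧ x i < β).card : ℝ) - N * (β - α) := by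
  have := card_split N (fun i => x i < β) (fun i => x i < α) (fun i => α ≤ x i ∧ x i < β)
    (fun i => by
      constructor
      · intro h1
        by_cases h2 : x i < α
        · exact Or.inl h2
        · exact Or.inr ⟨not_lt.1 h2, h1⟩
      · rintro (h1 | h1)
        · exact h1.trans_le h
        · exact h1.2) (fun i h1 h2 => absurd h1 (not_lt.2 h2.1))
  unfold EE
  rw [this]
  ring

lemma EE_abs (N : ℕ) (hN : 1 ≤ N) (x : ℕ → ℝ) (α β : ℝ) (h : α ≤ β) :
    |(((Finset.range N).filter fun i => α ≤ x i ∧ x i < β).card : ℝ) / N - (β - α)|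
      = |EE N x β - EE N x α| / N := by
  have hN0 : (0:ℝ) < N := by exact_mod_cast hN
  rw [EE_diff N x α β h]
  rw [eq_div_iff hN0.ne']
  nth_rewrite 2 [← abs_of_pos hN0]
  rw [← abs_mul]
  congr 1
  field_simp

lemma EE_le_disc (N : ℕ) (hN : 1 ≤ N) (x : ℕ → ℝ) (s t : ℝ) (hs0 : 0 ≤ s) (hs1 : s ≤ 1)
    (ht0 : 0 ≤ t) (ht1 : t ≤ 1) : EE N x t - EE N x s ≤ N * disc N x := by
  have hN0 : (0:ℝ) < N := by exact_mod_cast hN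
  have hbd : BddAbove (Set.range fun I : {p : ℝ × ℝ // 0 ≤ p.1 ∧ p.1 < p.2 ∧ p.2 ≤ 1} =>
      |(((Finset.range N).filter fun i => I.1.1 ≤ x i ∧ x i < I.1.2).card : ℝ) / N
      - (I.1.2 - I.1.1)|) := by
    refine ⟨1, ?_⟩
    rintro _ ⟨⟨⟨α, β⟩, h0, h1, h2⟩, rfl⟩
    simp only at h0 h1 h2 ⊢
    have c1 : (((Finset.range N).filter fun i => α ≤ x i ∧ x i < β).card : ℝ) / N ≤ 1 := by
      rw [div_le_one hN0]
      have := Finset.card_filter_le (Finset.range N) (fun i => α ≤ x i ∧ x i < β)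
      rw [Finset.card_range] at this
      exact_mod_cast this
    have c2 : 0 ≤ (((Finset.range N).filter fun i => α ≤ x i ∧ x i < β).card : ℝ) / N := by
      positivity
    rw [abs_le]
    constructor <;> linarith
  have aux : ∀ α β, 0 ≤ α → α < β → β ≤ 1 → |EE N x β - EE N x α| ≤ N * disc N x := by
    intro α β h0 h1 h2
    have := le_ciSup hbd ⟨(α, β), h0, h1, h2⟩
    simp only at this
    rw [EE_abs N hN x α β h1.le, div_le_iff₀ hN0] at this
    rw [mul_comm]
    exact this
  rcases lt_trichotomy s t with h | h | h
  · exact (le_abs_self _).trans (aux s t hs0 h ht1)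
  · subst h
    rw [sub_self]
    exact mul_nonneg hN0.le (Real.iSup_nonneg fun _ => abs_nonneg _)
  · have := aux t s ht0 h hs1
    rw [abs_sub_comm] at this
    exact (le_abs_self _).trans this

lemma card_mono (N : ℕ) (p q : ℕ → Prop) [DecidablePred p] [DecidablePred q] (h : ∀ i, p i → q i) :
    (((Finset.range N).filter p).card : ℝ) ≤ ((Finset.range N).filter q).card := by
  exact_mod_cast Finset.card_le_card (Finset.monotone_filter_right _ (fun i _ => h i))

lemma E_le_F {b : ℕ} (hb : 2 ≤ b) {σ : ℕ → ℕ} (hs : ∀ d < b, σ d < b) (N n : ℕ) (t : ℝ)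
    (h0 : 0 ≤ t) (h1 : t ≤ 1) :
    ∃ h ≤ b ^ n, EE N (Sperm b σ) t ≤ FF b σ N n h + 2 * N / (b:ℝ) ^ n := by
  have hb0 : (0:ℝ) < b := by positivity
  have hB : (0:ℝ) < (b:ℝ) ^ n := by positivity
  refine ⟨⌈t * (b:ℝ) ^ n⌉₊, ?_, ?_⟩
  · rw [Nat.ceil_le]
    push_cast
    nlinarith
  · have hc := card_mono N (fun i => Sperm b σ i < t) (fun i => TT b σ n i < ⌈t * (b:ℝ) ^ n⌉₊)
      (fun i hi => by
        rw [Nat.lt_ceil, ← div_lt_iff₀ hB]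
        exact (Sperm_bd hb hs n i).1.trans_lt hi)
    have hl := Nat.ceil_lt_add_one (show 0 ≤ t * (b:ℝ) ^ n by positivity)
    unfold EE FF
    have : (N:ℝ) * ⌈t * (b:ℝ) ^ n⌉₊ / (b:ℝ) ^ n ≤ N * t + 2 * N / (b:ℝ)^n := by
      rw [div_le_iff₀ hB, add_mul, div_mul_cancel₀ _ hB.ne']
      nlinarith [show (0:ℝ) ≤ N by positivity]
    linarith

lemma F_le_E' {b : ℕ} (hb : 2 ≤ b) {σ : ℕ → ℕ} (hs : ∀ d < b, σ d < b) (N n : ℕ) (t : ℝ)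
    (h0 : 0 ≤ t) (h1 : t ≤ 1) :
    ∃ h ≤ b ^ n, FF b σ N n h ≤ EE N (Sperm b σ) t + 2 * N / (b:ℝ) ^ n := by
  have hb0 : (0:ℝ) < b := by positivity
  have hB : (0:ℝ) < (b:ℝ) ^ n := by positivity
  have hle : ⌈t * (b:ℝ) ^ n⌉₊ ≤ b ^ n := by
    rw [Nat.ceil_le]
    push_cast
    nlinarith
  have hl := Nat.le_ceil (t * (b:ℝ) ^ n)
  refine ⟨⌈t * (b:ℝ) ^ n⌉₊ - 2, by omega, ?_⟩
  have hc := card_mono N (fun i => TT b σ n i < ⌈t * (b:ℝ) ^ n⌉₊ - 2) (fun i => Sperm b σ i < t)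
      (fun i hi => by
        have h3 : TT b σ n i + 1 < ⌈t * (b:ℝ) ^ n⌉₊ := by omega
        rw [Nat.lt_ceil] at h3
        refine (Sperm_bd hb hs n i).2.trans_lt ?_
        rw [div_lt_iff₀ hB]
        exact_mod_cast h3)
  have h4 : (⌈t * (b:ℝ) ^ n⌉₊ : ℝ) ≤ ((⌈t * (b:ℝ) ^ n⌉₊ - 2 : ℕ) : ℝ) + 2 := by
    exact_mod_cast (show ⌈t * (b:ℝ) ^ n⌉₊ ≤ ⌈t * (b:ℝ) ^ n⌉₊ - 2 + 2 by omega)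
  unfold EE FF
  generalize ⌈t * (b:ℝ) ^ n⌉₊ - 2 = u at *
  have : (N:ℝ) * t ≤ N * u / (b:ℝ) ^ n + 2 * N / (b:ℝ)^n := by
    rw [← add_div, le_div_iff₀ hB]
    nlinarith [show (0:ℝ) ≤ N by positivity]
  linarith

lemma F_le_E {b : ℕ} (hb : 2 ≤ b) {σ : ℕ → ℕ} (hs : ∀ d < b, σ d < b) (N n h : ℕ)
    (hh : h ≤ b ^ n) :
    ∃ t, 0 ≤ t ∧ t ≤ 1 ∧ FF b σ N n h ≤ EE N (Sperm b σ) t + 2 * N / (b:ℝ) ^ n := by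
  have hb0 : (0:ℝ) < b := by positivity
  have hB : (0:ℝ) < (b:ℝ) ^ n := by positivity
  rcases hh.eq_or_lt with rfl | hl
  · refine ⟨0, le_rfl, zero_le_one, ?_⟩
    rw [FF_top hb hs]
    unfold EE
    rw [mul_zero, sub_zero]
    positivity
  · refine ⟨((h:ℝ) + 1) / (b:ℝ) ^ n, by positivity, ?_, ?_⟩
    · rw [div_le_one hB]
      exact_mod_cast hl
    · have hc := card_mono N (fun i => TT b σ n i < h)
        (fun i => Sperm b σ i < ((h:ℝ) + 1) / (b:ℝ) ^ n) (fun i hi => by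
        refine (Sperm_bd hb hs n i).2.trans_lt ?_
        gcongr)
      unfold EE FF
      have : (N:ℝ) * (((h:ℝ) + 1) / (b:ℝ) ^ n) ≤ N * h / (b:ℝ) ^ n + 2 * N / (b:ℝ)^n := by
        rw [← add_div, ← mul_div_assoc]
        gcongr
        nlinarith [show (0:ℝ) ≤ N by positivity]
      linarith

lemma E_le_F' {b : ℕ} (hb : 2 ≤ b) {σ : ℕ → ℕ} (hs : ∀ d < b, σ d < b) (N n h : ℕ)
    (hh : h ≤ b ^ n) :
    ∃ t, 0 ≤ t ∧ t ≤ 1 ∧ EE N (Sperm b σ) t ≤ FF b σ N n h := by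
  have hb0 : (0:ℝ) < b := by positivity
  have hB : (0:ℝ) < (b:ℝ) ^ n := by positivity
  refine ⟨(h:ℝ) / (b:ℝ) ^ n, by positivity, ?_, ?_⟩
  · rw [div_le_one hB]
    exact_mod_cast hh
  · have hc := card_mono N (fun i => Sperm b σ i < (h:ℝ) / (b:ℝ) ^ n) (fun i => TT b σ n i < h)
        (fun i hi => by
        have := (Sperm_bd hb hs n i).1.trans_lt hi
        rw [div_lt_div_iff_of_pos_right hB] at this
        exact_mod_cast this)
    unfold EE FF
    rw [← mul_div_assoc]
    linarith

lemma half {b : ℕ} (hb : 2 ≤ b) {σ : ℕ → ℕ} (hs : ∀ d < b, σ d < b)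
    (hi : ∀ c < b, ∀ d < b, σ c = σ d → c = d)
    (hs' : ∀ d < b, (fun x => (b - σ x) % b) d < b)
    (hi' : ∀ c < b, ∀ d < b, (fun x => (b - σ x) % b) c = (fun x => (b - σ x) % b) d → c = d)
    (N : ℕ) (hN : 1 ≤ N) :
    disc N (Sperm b fun x => (b - σ x) % b) ≤ disc N (Sperm b σ) := by
  have hN0 : (0:ℝ) < N := by exact_mod_cast hN
  have hb1 : (1:ℝ) < b := by exact_mod_cast (show 1 < b by omega)
  have key : ∀ p q : ℝ, 0 ≤ p → p ≤ 1 → 0 ≤ q → q ≤ 1 →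
      EE N (Sperm b fun x => (b - σ x) % b) p - EE N (Sperm b fun x => (b - σ x) % b) q
        ≤ N * disc N (Sperm b σ) := by
    intro p q hp0 hp1 hq0 hq1
    have bound : ∀ n : ℕ,
        EE N (Sperm b fun x => (b - σ x) % b) p - EE N (Sperm b fun x => (b - σ x) % b) q
        ≤ N * disc N (Sperm b σ) + 6 * N * ((b:ℝ)⁻¹) ^ n := by
      intro n
      obtain ⟨c, hc⟩ := main_ind hb hs hi hs' hi' N n
      obtain ⟨h, hh, e1⟩ := E_le_F hb hs' N n p hp0 hp1
      obtain ⟨k, hk, e2⟩ := F_le_E' hb hs' N n q hq0 hq1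
      obtain ⟨h', hh', e3⟩ := hc h hh
      obtain ⟨k', hk', e4⟩ := hc k hk
      obtain ⟨t, t0, t1, e5⟩ := F_le_E hb hs N n k' hk'
      obtain ⟨s, s0, s1, e6⟩ := E_le_F' hb hs N n h' hh'
      have e7 := EE_le_disc N hN (Sperm b σ) s t s0 s1 t0 t1
      rw [inv_pow, ← div_eq_mul_inv]
      have : 6 * (N:ℝ) / (b:ℝ) ^ n = 3 * (2 * N / (b:ℝ) ^ n) := by ring
      linarith
    have lim : Filter.Tendsto (fun n : ℕ => N * disc N (Sperm b σ) + 6 * N * ((b:ℝ)⁻¹) ^ n)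
        Filter.atTop (nhds (N * disc N (Sperm b σ) + 6 * N * 0)) :=
      tendsto_const_nhds.add ((tendsto_pow_atTop_nhds_zero_of_lt_one (by positivity)
        (inv_lt_one_of_one_lt₀ hb1)).const_mul _)
    have := ge_of_tendsto' lim bound
    simpa using this
  have : Nonempty {p : ℝ × ℝ // 0 ≤ p.1 ∧ p.1 < p.2 ∧ p.2 ≤ 1} :=
    ⟨⟨(0, 1), by norm_num, by norm_num, by norm_num⟩⟩
  conv_lhs => unfold disc
  refine ciSup_le ?_
  rintro ⟨⟨α, β⟩, h0, h1, h2⟩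
  simp only at h0 h1 h2 ⊢
  rw [EE_abs N hN _ α β h1.le, div_le_iff₀ hN0, mul_comm]
  rw [abs_le]
  have k1 := key α β h0 (by linarith) (by linarith) h2
  have k2 := key β α (by linarith) h2 h0 (by linarith)
  constructor <;> linarith

lemma mneg_inj {b s t : ℕ} (hs : s < b) (ht : t < b) (h : (b - s) % b = (b - t) % b) : s = t := by
  rcases Nat.eq_zero_or_pos s with rfl | h0 <;> rcases Nat.eq_zero_or_pos t with rfl | h1
  · rfl
  · rw [Nat.mod_eq_of_lt (show b - t < b by omega)] at h; simp at h; omega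
  · rw [Nat.mod_eq_of_lt (show b - s < b by omega)] at h; simp at h; omega
  · rw [Nat.mod_eq_of_lt (show b - t < b by omega), Nat.mod_eq_of_lt (show b - s < b by omega)] at h
    omega

lemma mneg_neg {b s : ℕ} (hs : s < b) : (b - (b - s) % b) % b = s := by
  rcases Nat.eq_zero_or_pos s with rfl | h0
  · simp
  · rw [Nat.mod_eq_of_lt (show b - s < b by omega), Nat.mod_eq_of_lt (by omega)]; omega

theorem symmetry_lemma_negation (b : ℕ) (hb : 2 ≤ b) (σ : ℕ → ℕ)
    (hσ : Set.BijOn σ (Set.Iio b) (Set.Iio b)) (N : ℕ) (hN : 1 ≤ N) :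
    disc N (Sperm b σ) = disc N (Sperm b fun x => (b - σ x) % b) := by
  have hs : ∀ d < b, σ d < b := fun d hd => hσ.mapsTo hd
  have hi : ∀ c < b, ∀ d < b, σ c = σ d → c = d := fun c hc d hd h => hσ.injOn hc hd h
  have hs' : ∀ d < b, (fun x => (b - σ x) % b) d < b := fun d _ => Nat.mod_lt _ (by omega)
  have hi' : ∀ c < b, ∀ d < b, (fun x => (b - σ x) % b) c = (fun x => (b - σ x) % b) d → c = d :=
    fun c hc d hd h => hi c hc d hd (mneg_inj (hs c hc) (hs d hd) h)
  have hs'' : ∀ d < b, (fun x => (b - (fun x => (b - σ x) % b) x) % b) d < b :=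
    fun d _ => Nat.mod_lt _ (by omega)
  have hi'' : ∀ c < b, ∀ d < b, (fun x => (b - (fun x => (b - σ x) % b) x) % b) c
      = (fun x => (b - (fun x => (b - σ x) % b) x) % b) d → c = d :=
    fun c hc d hd h => hi' c hc d hd (mneg_inj (hs' c hc) (hs' d hd) h)
  refine le_antisymm ?_ (half hb hs hi hs' hi' N hN)
  have := half hb hs' hi' hs'' hi'' N hN
  have e : (Sperm b fun x => (b - (fun x => (b - σ x) % b) x) % b) = Sperm b σ := by
    funext n
    unfold Sperm
    refine tsum_congr fun j => ?_
    simp only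
    rw [mneg_neg (hs _ (Nat.mod_lt _ (by omega)))]
  rwa [e] at this
end

section
/- Let f : [0,1] → ℝ be bounded, continuous, with mean zero, symmetric f(x) = f(1-x), and with Fourier coefficients satisfying f̂(k) ≥ c/k^2 for all nonzero integers k and some c > 0. Let (x_n) be generated greedily from any finite seed by x_N = argmin_x sum_{k<N} f({x - x_k}). Then the extreme discrepancy satisfies D_N(X) ≤ C N^{-1/3} for a constant C depending only on the seed and f. -/
open scoped Classical ComplexOrder Real

open MeasureTheory AddCircle in
theorem aux_sq (S : Finset ℕ) (t : UnitAddCircle) :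
    ∑ j ∈ S, ∑ l ∈ S, (fourier (-((j:ℤ) - l)) t : ℂ) = ((‖∑ l ∈ S, (fourier (l:ℤ) t : ℂ)‖ ^ 2 : ℝ) : ℂ) := by
  push_cast
  rw [← Complex.conj_mul', map_sum, Finset.sum_mul_sum]
  refine Finset.sum_congr rfl fun j _ => Finset.sum_congr rfl fun l _ => ?_
  rw [← fourier_neg, ← fourier_add]
  congr 2; ring

open MeasureTheory AddCircle in
theorem aux_fejer (F : C(UnitAddCircle, ℂ)) (n : ℕ) :
    ‖∑ j ∈ Finset.range n, ∑ l ∈ Finset.range n, fourierCoeff F ((j:ℤ) - l)‖ ≤ n * ‖F‖ := by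
  have hint : ∀ (G : C(UnitAddCircle, ℂ)), Integrable G (haarAddCircle (T := 1)) := fun G =>
    G.continuous.integrable_of_hasCompactSupport (HasCompactSupport.of_compactSpace _)
  have key : ∀ G : C(UnitAddCircle, ℂ),
      ∑ j ∈ Finset.range n, ∑ l ∈ Finset.range n, fourierCoeff G ((j:ℤ) - l)
      = ∫ t : UnitAddCircle, ((‖∑ l ∈ Finset.range n, (fourier (l:ℤ) t : ℂ)‖ ^ 2 : ℝ) : ℂ) * G t
          ∂haarAddCircle := by
    intro G
    simp_rw [← aux_sq, Finset.sum_mul]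
    rw [integral_finsetSum]
    · refine Finset.sum_congr rfl fun j _ => ?_
      rw [integral_finsetSum]
      · rfl
      · intro l _
        exact (hint G).fourier_smul _
    · intro j _
      refine integrable_finsetSum _ fun l _ => ?_
      exact (hint G).fourier_smul _
  have h1 : ∫ t : UnitAddCircle, ‖∑ l ∈ Finset.range n, (fourier (l:ℤ) t : ℂ)‖ ^ 2
      ∂haarAddCircle = n := by
    have := key (fourier 0)
    have h2 : ∀ k : ℤ, fourierCoeff (fourier 0 : C(UnitAddCircle, ℂ)) k = if k = 0 then 1 else 0 := by
      intro k
      rw [fourierCoeff_fourier, Pi.single_apply]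
    simp only [h2, fourier_zero, mul_one] at this
    rw [integral_complex_ofReal] at this
    apply Complex.ofReal_injective
    rw [← this]
    have h3 : ∀ j ∈ Finset.range n, ∑ l ∈ Finset.range n, (if (j:ℤ) - l = 0 then (1:ℂ) else 0) = 1 := by
      intro j hj
      rw [Finset.sum_eq_single j]
      · simp
      · intro b _ hb
        rw [if_neg]; omega
      · intro h; exact absurd hj h
    rw [Finset.sum_congr rfl h3]; simp
  rw [key, ← h1, ← integral_mul_const]
  refine norm_integral_le_of_norm_le ?_ (Filter.Eventually.of_forall fun t => ?_)
  · apply Continuous.integrable_of_hasCompactSupport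
    · fun_prop
    · exact HasCompactSupport.of_compactSpace _
  · rw [norm_mul, Complex.norm_real, Real.norm_of_nonneg (by positivity)]
    gcongr
    exact F.norm_coe_le_norm t

theorem aux_summable (F : C(UnitAddCircle, ℂ)) (a : ℤ → ℝ) (ha : ∀ k, 0 ≤ a k)
    (hF : ∀ k, fourierCoeff F k = a k) : Summable a := by
  apply summable_of_sum_le (c := 3 * ‖F‖) ha
  intro u
  obtain ⟨M, hM0, hM⟩ : ∃ M : ℕ, 0 < M ∧ ∀ k ∈ u, |k| < M := by
    refine ⟨∑ k ∈ u, k.natAbs + 1, by omega, fun k hk => ?_⟩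
    have := Finset.single_le_sum (f := fun k : ℤ => k.natAbs) (fun _ _ => Nat.zero_le _) hk
    push_cast
    have : (k.natAbs : ℤ) ≤ ((∑ k ∈ u, k.natAbs : ℕ) : ℤ) := by exact_mod_cast this
    push_cast at this
    linarith
  have h := aux_fejer F (3 * M)
  simp only [hF] at h
  have h1 : ∑ j ∈ Finset.range (3*M), ∑ l ∈ Finset.range (3*M), a ((j:ℤ) - l) ≤ 3 * M * ‖F‖ := by
    have e : (∑ j ∈ Finset.range (3*M), ∑ l ∈ Finset.range (3*M), (a ((j:ℤ) - l) : ℂ))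
      = ((∑ j ∈ Finset.range (3*M), ∑ l ∈ Finset.range (3*M), a ((j:ℤ) - l) : ℝ) : ℂ) := by
      push_cast; rfl
    rw [e, Complex.norm_real] at h
    push_cast at h
    exact (le_abs_self _).trans h
  have h2 : ∀ j ∈ Finset.Ico M (2*M), ∑ k ∈ u, a k ≤ ∑ l ∈ Finset.range (3*M), a ((j:ℤ) - l) := by
    intro j hj
    rw [Finset.mem_Ico] at hj
    have : ∑ l ∈ Finset.range (3*M), a ((j:ℤ) - l)
      = ∑ k ∈ (Finset.range (3*M)).image (fun l : ℕ => (j:ℤ) - l), a k := by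
      rw [Finset.sum_image]
      intro x _ y _ hxy
      simp only at hxy; omega
    rw [this]
    apply Finset.sum_le_sum_of_subset_of_nonneg
    · intro k hk
      have := abs_lt.1 (hM k hk)
      rw [Finset.mem_image]
      refine ⟨(j - k).toNat, ?_, ?_⟩
      · rw [Finset.mem_range]; omega
      · omega
    · intros; apply ha
  have h3 : ∑ j ∈ Finset.Ico M (2*M), ∑ k ∈ u, a k ≤
      ∑ j ∈ Finset.range (3*M), ∑ l ∈ Finset.range (3*M), a ((j:ℤ) - l) := by
    refine (Finset.sum_le_sum h2).trans ?_
    apply Finset.sum_le_sum_of_subset_of_nonneg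
    · intro j hj
      rw [Finset.mem_Ico] at hj
      rw [Finset.mem_range]; omega
    · intros; exact Finset.sum_nonneg fun _ _ => ha _
  rw [Finset.sum_const, Nat.card_Ico, show 2 * M - M = M by omega, nsmul_eq_mul] at h3
  have hMp : (0:ℝ) < M := by exact_mod_cast hM0
  have : (M:ℝ) * ∑ k ∈ u, a k ≤ M * (3 * ‖F‖) := by linarith
  exact le_of_mul_le_mul_left this hMp

theorem aux_double (b : ℤ → ℝ) (x : ℕ → ℝ) (g : ℝ → ℝ) (N : ℕ)
    (h : ∀ y : ℝ, HasSum (fun k : ℤ => (b k : ℂ) * fourier k (y : UnitAddCircle)) (g y : ℂ)) :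
    HasSum (fun k : ℤ => b k * ‖∑ l ∈ Finset.range N, (fourier k (x l : UnitAddCircle) : ℂ)‖ ^ 2)
      (∑ m ∈ Finset.range N, ∑ n ∈ Finset.range N, g (x m - x n)) := by
  rw [← Complex.hasSum_ofReal]
  push_cast
  have := hasSum_sum (s := Finset.range N) fun m _ =>
    hasSum_sum (s := Finset.range N) fun n _ => h (x m - x n)
  convert this using 2 with k
  rw [← Complex.mul_conj', map_sum, Finset.sum_mul_sum, Finset.mul_sum]
  refine Finset.sum_congr rfl fun m _ => ?_
  rw [Finset.mul_sum]
  refine Finset.sum_congr rfl fun n _ => ?_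
  congr 1
  rw [← fourier_neg, fourier_coe_apply, fourier_coe_apply, fourier_coe_apply, ← Complex.exp_add]
  congr 1; push_cast; ring

theorem aux_B2 (y : ℝ) : HasSum (fun k : ℤ => ((1 / (k:ℝ)^2 : ℝ) : ℂ) * fourier k (y : UnitAddCircle))
    ((2 * π ^ 2 * (Int.fract y ^ 2 - Int.fract y + 6⁻¹) : ℝ) : ℂ) := by
  have h := hasSum_one_div_pow_mul_fourier_mul_bernoulliFun (k := 2) le_rfl (x := Int.fract y)
    ⟨Int.fract_nonneg _, (Int.fract_lt_one _).le⟩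
  have e : ((Int.fract y : ℝ) : UnitAddCircle) = y := by
    rw [← Int.self_sub_floor]
    simp
  rw [e, bernoulliFun_two] at h
  convert h using 1
  · ext k; push_cast; rfl
  · rw [mul_pow, mul_pow, Complex.I_sq]; rw [Nat.factorial_two]; push_cast; ring


theorem aux_isum (s : Finset ℕ) {f : ℕ → ℝ → ℝ} {a b : ℝ}
    (h : ∀ i ∈ s, IntervalIntegrable (f i) MeasureTheory.volume a b) :
    IntervalIntegrable (fun t => ∑ i ∈ s, f i t) MeasureTheory.volume a b := by
  have := IntervalIntegrable.sum s h
  simpa only [Finset.sum_fn] using this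

noncomputable def auxpsi (a t : ℝ) : ℝ := (if a < t then 1 else 0) - t + a - 1/2

open MeasureTheory in
theorem auxpsi_int (a b p q : ℝ) :
    IntervalIntegrable (fun t => auxpsi a t * auxpsi b t) volume p q := by
  have h : ∀ a : ℝ, IntervalIntegrable (fun t : ℝ => if a < t then (1:ℝ) else 0) volume p q := by
    intro a
    apply Monotone.intervalIntegrable
    intro s t hst
    dsimp only
    split_ifs <;> linarith
  have h2 : ∀ t, auxpsi a t * auxpsi b t = (if max a b < t then (1:ℝ) else 0)
      + (b - 1/2 - t) * (if a < t then (1:ℝ) else 0) + (a - 1/2 - t) * (if b < t then (1:ℝ) else 0)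
      + (b - 1/2 - t) * (a - 1/2 - t) := by
    intro t
    unfold auxpsi
    by_cases h1 : a < t <;> by_cases h2 : b < t <;> simp [h1, h2] <;> ring
  simp_rw [h2]
  refine (((h _).add ?_).add ?_).add ?_
  · exact (h a).continuousOn_mul (by fun_prop)
  · exact (h b).continuousOn_mul (by fun_prop)
  · exact Continuous.intervalIntegrable (by fun_prop) _ _

theorem aux_poly (A B p q : ℝ) : ∫ t in p..q, (A - t) * (B - t)
    = A * B * (q - p) - (A + B) * (q^2 - p^2) / 2 + (q^3 - p^3)/3 := by
  have hd : ∀ t ∈ Set.uIcc p q, HasDerivAt (fun t : ℝ => A * B * t - (A + B) * t^2 / 2 + t^3/3)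
      ((A - t) * (B - t)) t := by
    intro t _
    have := (((hasDerivAt_id t).const_mul (A*B)).sub (((hasDerivAt_pow 2 t).const_mul (A+B)).div_const 2)).add
      ((hasDerivAt_pow 3 t).div_const 3)
    refine HasDerivAt.congr_deriv this ?_
    norm_num; ring
  rw [intervalIntegral.integral_eq_sub_of_hasDerivAt hd (Continuous.intervalIntegrable (by fun_prop) _ _)]
  ring

open MeasureTheory in
theorem auxpsi_integral_le (a b : ℝ) (ha : 0 ≤ a) (hab : a ≤ b) (hb : b ≤ 1) :
    ∫ t in (0:ℝ)..1, auxpsi a t * auxpsi b t = ((b-a)^2 - (b-a) + 6⁻¹)/2 := by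
  rw [← intervalIntegral.integral_add_adjacent_intervals (auxpsi_int a b 0 a) (auxpsi_int a b a 1),
    ← intervalIntegral.integral_add_adjacent_intervals (auxpsi_int a b a b) (auxpsi_int a b b 1)]
  have e1 : ∫ t in (0:ℝ)..a, auxpsi a t * auxpsi b t = ∫ t in (0:ℝ)..a, (a - 1/2 - t) * (b - 1/2 - t) := by
    refine intervalIntegral.integral_congr_Ioo_of_le ha fun t ht => ?_
    have h1 : ¬ a < t := not_lt.2 ht.2.le
    have h2 : ¬ b < t := not_lt.2 (ht.2.le.trans hab)
    simp only [auxpsi, h1, h2, if_false]; ring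
  have e2 : ∫ t in a..b, auxpsi a t * auxpsi b t = ∫ t in a..b, (a + 1/2 - t) * (b - 1/2 - t) := by
    refine intervalIntegral.integral_congr_Ioo_of_le hab fun t ht => ?_
    have h1 : a < t := ht.1
    have h2 : ¬ b < t := not_lt.2 ht.2.le
    simp only [auxpsi, h1, h2, if_false, if_true]; ring
  have e3 : ∫ t in b..1, auxpsi a t * auxpsi b t = ∫ t in b..1, (a + 1/2 - t) * (b + 1/2 - t) := by
    refine intervalIntegral.integral_congr_Ioo_of_le hb fun t ht => ?_
    have h1 : a < t := hab.trans_lt ht.1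
    have h2 : b < t := ht.1
    simp only [auxpsi, h1, h2, if_true]; ring
  rw [e1, e2, e3, aux_poly, aux_poly, aux_poly]
  ring

theorem auxpsi_integral (a b : ℝ) (ha : a ∈ Set.Ico (0:ℝ) 1) (hb : b ∈ Set.Ico (0:ℝ) 1) :
    ∫ t in (0:ℝ)..1, auxpsi a t * auxpsi b t
      = (Int.fract (a - b)^2 - Int.fract (a-b) + 6⁻¹)/2 := by
  rcases le_or_gt b a with h | h
  · have : Int.fract (a - b) = a - b := Int.fract_eq_self.2 ⟨by linarith, by linarith [ha.2, hb.1]⟩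
    rw [this, ← auxpsi_integral_le b a hb.1 h ha.2.le]
    congr 1; ext t; ring
  · have : Int.fract (a - b) = a - b + 1 := by
      rw [← Int.fract_add_one]
      exact Int.fract_eq_self.2 ⟨by linarith [hb.2, ha.1], by linarith [ha.2, hb.1]⟩
    rw [this, auxpsi_integral_le a b ha.1 h.le hb.2.le]
    ring

open MeasureTheory in
theorem aux_piece (H : ℝ → ℝ) (hH : IntervalIntegrable (fun t => H t ^ 2) volume 0 1)
    (q η : ℝ) (hη : 0 ≤ η) (hq : 0 ≤ q) (hq1 : q + η / 4 ≤ 1)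
    (h : ∀ t ∈ Set.Icc q (q + η/4), η / 2 ≤ |H t|) :
    η ^ 3 / 16 ≤ ∫ t in (0:ℝ)..1, H t ^ 2 := by
  have h1 : ∫ t in q..(q + η/4), H t ^ 2 ≤ ∫ t in (0:ℝ)..1, H t ^ 2 := by
    apply intervalIntegral.integral_mono_interval hq (by linarith) hq1 _ hH
    exact Filter.Eventually.of_forall fun t => sq_nonneg _
  have h2 : ∫ t in q..(q + η/4), (η/2)^2 ≤ ∫ t in q..(q + η/4), H t ^ 2 := by
    apply intervalIntegral.integral_mono_on (by linarith) (by simp)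
    · apply hH.mono_set
      rw [Set.uIcc_of_le (by linarith), Set.uIcc_of_le zero_le_one]
      exact Set.Icc_subset_Icc hq hq1
    · intro t ht
      rw [← sq_abs (H t)]
      have := h t ht
      gcongr
  rw [intervalIntegral.integral_const, smul_eq_mul] at h2
  linarith [h1, h2, show (q + η/4 - q) * (η/2)^2 = η^3/16 by ring]

open MeasureTheory in
theorem aux_osc (H : ℝ → ℝ) (hH : IntervalIntegrable (fun t => H t ^ 2) volume 0 1)
    (hlip : ∀ s t, 0 ≤ s → s ≤ t → t ≤ 1 → H s - (t - s) ≤ H t) (h01 : H 0 = H 1)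
    (p : ℝ) (hp : 0 ≤ p) (hp1 : p ≤ 1) (η : ℝ) (hη : 0 ≤ η) (hη4 : η ≤ 4) (h : η ≤ |H p|) :
    η ^ 3 / 16 ≤ ∫ t in (0:ℝ)..1, H t ^ 2 := by
  rcases le_abs.1 h with h | h
  · by_cases hc : p + η/4 ≤ 1
    · refine aux_piece H hH p η hη hp hc fun t ht => ?_
      have := hlip p t hp ht.1 (ht.2.trans hc)
      exact le_trans (by linarith [ht.2]) (le_abs_self _)
    · refine aux_piece H hH 0 η hη le_rfl (by linarith) fun t ht => ?_
      have h1 := hlip p 1 hp hp1 le_rfl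
      have h2 := hlip 0 t le_rfl ht.1 (by linarith [ht.2])
      exact le_trans (by linarith [ht.2]) (le_abs_self _)
  · by_cases hc : 0 ≤ p - η/4
    · refine aux_piece H hH (p - η/4) η hη hc (by linarith) fun t ht => ?_
      have := hlip t p (by linarith [ht.1]) (by linarith [ht.2]) hp1
      exact le_trans (by linarith [ht.1]) (neg_le_abs _)
    · refine aux_piece H hH (1 - η/4) η hη (by linarith) (by linarith) fun t ht => ?_
      have h1 := hlip 0 p le_rfl hp hp1
      have h2 := hlip t 1 (by linarith [ht.1]) (by linarith [ht.2]) le_rfl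
      exact le_trans (by linarith [ht.1]) (neg_le_abs _)

theorem aux_disc (N : ℕ) (hN : 1 ≤ N) (x : ℕ → ℝ) (hx : ∀ n, x n ∈ Set.Ico (0 : ℝ) 1)
    (α β : ℝ) (hα : 0 ≤ α) (hαβ : α < β) (hβ : β ≤ 1) :
    |(((Finset.range N).filter fun i => α ≤ x i ∧ x i < β).card : ℝ) / N - (β - α)| ^ 3 ≤
      64 / (N:ℝ)^2 * ∑ m ∈ Finset.range N, ∑ n ∈ Finset.range N,
        (Int.fract (x m - x n)^2 - Int.fract (x m - x n) + 6⁻¹) := by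
  have hNp : (0:ℝ) < N := by exact_mod_cast hN
  set A : ℝ → ℝ := fun t => ∑ i ∈ Finset.range N, if x i < t then (1:ℝ) else 0 with hA
  set H : ℝ → ℝ := fun t => (∑ i ∈ Finset.range N, auxpsi (x i) t) / N with hHdef
  set K : ℝ := (∑ i ∈ Finset.range N, (x i - 1/2)) / N
  have hHA : ∀ t, H t = A t / N - t + K := by
    intro t
    simp only [hHdef, hA, K, auxpsi, Finset.sum_add_distrib, Finset.sum_sub_distrib, Finset.sum_const,
      Finset.card_range, nsmul_eq_mul]
    field_simp
    ring
  have hAmono : Monotone A := by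
    intro s t hst
    refine Finset.sum_le_sum fun i _ => ?_
    split_ifs <;> first | linarith | norm_num
  have hcard : (((Finset.range N).filter fun i => α ≤ x i ∧ x i < β).card : ℝ) = A β - A α := by
    rw [Finset.card_filter]
    push_cast
    rw [hA]
    simp only
    rw [← Finset.sum_sub_distrib]
    refine Finset.sum_congr rfl fun i _ => ?_
    rcases lt_or_ge (x i) α with h | h
    · have h3 : x i < β := h.trans hαβ
      simp [h, h3]
    · simp [h, not_lt.2 h]
  have hA0 : A 0 = 0 := Finset.sum_eq_zero fun i _ => if_neg (not_lt.2 (hx i).1)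
  have hA1 : A 1 = N := by
    simp only [hA]
    rw [Finset.sum_congr rfl fun i _ => if_pos (hx i).2]; simp
  have hδ : (A β - A α) / N - (β - α) = H β - H α := by rw [hHA, hHA]; ring
  rw [hcard, hδ]
  have hsq : ∀ t, H t ^ 2 = (1 / (N:ℝ)^2) * ∑ m ∈ Finset.range N, ∑ n ∈ Finset.range N,
      auxpsi (x m) t * auxpsi (x n) t := by
    intro t
    rw [← Finset.sum_mul_sum]; simp only [hHdef]; ring
  have hint : ∫ t in (0:ℝ)..1, H t ^ 2 = 1 / (N:ℝ)^2 * ∑ m ∈ Finset.range N, ∑ n ∈ Finset.range N,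
        (Int.fract (x m - x n)^2 - Int.fract (x m - x n) + 6⁻¹)/2 := by
    simp_rw [hsq]
    rw [intervalIntegral.integral_const_mul, intervalIntegral.integral_finsetSum]
    · congr 1
      refine Finset.sum_congr rfl fun m _ => ?_
      rw [intervalIntegral.integral_finsetSum]
      · exact Finset.sum_congr rfl fun n _ => auxpsi_integral _ _ (hx m) (hx n)
      · intro n _; exact auxpsi_int _ _ _ _
    · intro m _
      exact aux_isum _ fun n _ => auxpsi_int _ _ _ _
  have hHint : IntervalIntegrable (fun t => H t ^ 2) MeasureTheory.volume 0 1 := by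
    simp_rw [hsq]
    exact (aux_isum _ fun m _ =>
      aux_isum _ fun n _ => auxpsi_int _ _ _ _).const_mul _
  have hlip : ∀ s t, 0 ≤ s → s ≤ t → t ≤ 1 → H s - (t - s) ≤ H t := by
    intro s t _ hst _
    rw [hHA, hHA]
    have := div_le_div_of_nonneg_right (hAmono hst) hNp.le
    linarith
  have h01 : H 0 = H 1 := by
    rw [hHA, hHA, hA0, hA1, div_self hNp.ne']; ring
  set δ := |H β - H α| with hδdef
  have hδ1 : δ ≤ 8 := by
    rw [hδdef, ← hδ, abs_le]
    have h1 : A β ≤ N := hA1 ▸ hAmono hβ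
    have h2 : 0 ≤ A α := hA0 ▸ hAmono hα
    have h3 : A α ≤ A β := hAmono hαβ.le
    have h4 : 0 ≤ (A β - A α) / N := div_nonneg (by linarith) hNp.le
    have h5 : (A β - A α) / N ≤ 1 := (div_le_one hNp).2 (by linarith)
    constructor <;> linarith
  have hδ0 : 0 ≤ δ := abs_nonneg _
  have hex : ∃ p, 0 ≤ p ∧ p ≤ 1 ∧ δ / 2 ≤ |H p| := by
    by_contra! hcon
    have h1 := hcon α hα (by linarith)
    have h2 := hcon β (by linarith) hβ
    have := abs_sub (H β) (H α)
    linarith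
  obtain ⟨p, hp, hp1, hpδ⟩ := hex
  have := aux_osc H hHint hlip h01 p hp hp1 (δ/2) (by linarith) (by linarith) hpδ
  rw [hint] at this
  simp_rw [← Finset.sum_div] at this
  rw [div_mul_eq_mul_div, one_mul] at this
  rw [div_mul_eq_mul_div, mul_div_assoc]
  calc δ^3 = 128 * ((δ/2)^3/16) := by ring
    _ ≤ _ := mul_le_mul_of_nonneg_left this (by norm_num)
    _ = _ := by ring

open MeasureTheory AddCircle in
theorem aux_F (f : ℝ → ℝ)
    (hcont : ContinuousOn f (Set.Icc (0 : ℝ) 1)) (hsym : ∀ x ∈ Set.Icc (0 : ℝ) 1, f x = f (1 - x)) :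
    ∃ F : C(UnitAddCircle, ℂ), (∀ y : ℝ, F (y : UnitAddCircle) = f (Int.fract y)) ∧
      ∀ k : ℤ, fourierCoeff F k =
        ∫ t in (0 : ℝ)..1, (f t : ℂ) * Complex.exp (-(2 * π * Complex.I * k * t)) := by
  have h01 : f 0 = f 1 := by simpa using hsym 0 (by simp)
  have hc : Continuous (AddCircle.liftIco (1:ℝ) 0 (fun t => (f t : ℂ))) :=
    AddCircle.liftIco_zero_continuous (by simp [h01]) (Complex.continuous_ofReal.comp_continuousOn hcont)
  refine ⟨⟨_, hc⟩, fun y => ?_, fun k => ?_⟩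
  · have e : (y : UnitAddCircle) = ((Int.fract y : ℝ) : UnitAddCircle) := by
      rw [← Int.self_sub_floor]
      simp
    rw [e]
    exact AddCircle.liftIco_zero_coe_apply (f := fun t => (f t : ℂ)) ⟨Int.fract_nonneg _, Int.fract_lt_one _⟩
  · rw [fourierCoeff_eq_intervalIntegral _ _ 0]
    simp only [zero_add, div_one, one_smul]
    refine intervalIntegral.integral_congr_Ioo_of_le zero_le_one fun t ht => ?_
    simp only [ContinuousMap.coe_mk]
    rw [AddCircle.liftIco_zero_coe_apply ⟨ht.1.le, ht.2⟩, fourier_coe_apply, smul_eq_mul, mul_comm]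
    congr 2; push_cast; ring

open MeasureTheory AddCircle in
theorem aux_min (f : ℝ → ℝ) (F : C(UnitAddCircle, ℂ))
    (hF : ∀ y : ℝ, F (y : UnitAddCircle) = f (Int.fract y)) (h0 : fourierCoeff F 0 = 0)
    (N : ℕ) (x : ℕ → ℝ) (m : ℝ)
    (hm : ∀ y ∈ Set.Ico (0 : ℝ) 1, m ≤ ∑ k ∈ Finset.range N, f (Int.fract (y - x k))) : m ≤ 0 := by
  have hint : ∀ (G : UnitAddCircle → ℝ), Continuous G → Integrable G (haarAddCircle (T := 1)) := fun G hG =>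
    hG.integrable_of_hasCompactSupport (HasCompactSupport.of_compactSpace _)
  have hI : ∫ t, (F t).re ∂(haarAddCircle (T := 1)) = 0 := by
    have h1 : ∫ t, F t ∂(haarAddCircle (T := 1)) = 0 := by
      simpa [fourierCoeff] using h0
    have hFi : Integrable F (haarAddCircle (T := 1)) :=
      F.continuous.integrable_of_hasCompactSupport (HasCompactSupport.of_compactSpace _)
    have := integral_re hFi
    simp only [h1] at this
    simpa using this
  have hsum : ∫ t, ∑ k ∈ Finset.range N, (F (t - (x k : UnitAddCircle))).re ∂(haarAddCircle (T := 1)) = 0 := by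
    rw [integral_finsetSum]
    · refine Finset.sum_eq_zero fun k _ => ?_
      rw [integral_sub_right_eq_self (fun t => (F t).re) (x k : UnitAddCircle)]
      exact hI
    · intro k _
      apply hint; fun_prop
  rw [← hsum]
  have hconst : m = ∫ t, m ∂(haarAddCircle (T := 1)) := by simp
  rw [hconst]
  apply integral_mono (by simp)
  · apply hint; fun_prop
  · intro t
    induction t using QuotientAddGroup.induction_on with
    | H y =>
      have := hm (Int.fract y) ⟨Int.fract_nonneg _, Int.fract_lt_one _⟩
      refine this.trans (le_of_eq ?_)
      refine Finset.sum_congr rfl fun k _ => ?_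
      change _ = (F ((y : UnitAddCircle) - (x k : UnitAddCircle))).re
      rw [← AddCircle.coe_sub, hF, Complex.ofReal_re]
      congr 1
      rw [Int.fract_eq_fract]
      refine ⟨-⌊y⌋, ?_⟩
      rw [← Int.self_sub_floor y]; push_cast; ring

theorem aux_energy (f : ℝ → ℝ) (B : ℝ) (hB : ∀ x ∈ Set.Icc (0 : ℝ) 1, |f x| ≤ B)
    (hsym : ∀ x ∈ Set.Icc (0 : ℝ) 1, f x = f (1 - x))
    (s : ℕ) (hs : 1 ≤ s) (x : ℕ → ℝ)
    (hneg : ∀ N, s ≤ N → ∑ k ∈ Finset.range N, f (Int.fract (x N - x k)) ≤ 0) (N : ℕ) :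
    ∑ m ∈ Finset.range N, ∑ n ∈ Finset.range N, f (Int.fract (x m - x n)) ≤ s * B * N := by
  have hfr : ∀ y : ℝ, f (Int.fract y) ≤ B := fun y =>
    (le_abs_self _).trans (hB _ ⟨Int.fract_nonneg _, (Int.fract_lt_one _).le⟩)
  have hB0 : 0 ≤ B := (abs_nonneg _).trans (hB 0 (by simp))
  have hs1 : (1:ℝ) ≤ s := by exact_mod_cast hs
  have hev : ∀ y : ℝ, f (Int.fract (-y)) = f (Int.fract y) := by
    intro y
    by_cases h : Int.fract y = 0
    · rw [h, Int.fract_neg_eq_zero.2 h]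
    · rw [Int.fract_neg h, ← hsym _ ⟨Int.fract_nonneg _, (Int.fract_lt_one _).le⟩]
  rcases le_total N s with h | h
  · calc _ ≤ ∑ m ∈ Finset.range N, ∑ n ∈ Finset.range N, B :=
          Finset.sum_le_sum fun _ _ => Finset.sum_le_sum fun _ _ => hfr _
      _ = N * B * N := by simp; ring
      _ ≤ _ := by gcongr
  · induction N, h using Nat.le_induction with
    | base =>
      calc _ ≤ ∑ m ∈ Finset.range s, ∑ n ∈ Finset.range s, B :=
          Finset.sum_le_sum fun _ _ => Finset.sum_le_sum fun _ _ => hfr _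
        _ = s * B * s := by simp; ring
    | succ N hN ih =>
      simp_rw [Finset.sum_range_succ, Finset.sum_add_distrib]
      have h1 : ∑ m ∈ Finset.range N, f (Int.fract (x m - x N))
        = ∑ m ∈ Finset.range N, f (Int.fract (x N - x m)) := by
        refine Finset.sum_congr rfl fun m _ => ?_
        rw [← hev, neg_sub]
      rw [h1]
      have h2 := hneg N hN
      have h3 := hfr (x N - x N)
      push_cast
      nlinarith

theorem greedy_main (f : ℝ → ℝ)
    (hbdd : ∃ C : ℝ, ∀ x ∈ Set.Icc (0 : ℝ) 1, |f x| ≤ C)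
    (hcont : ContinuousOn f (Set.Icc (0 : ℝ) 1))
    (hmean : ∫ x in (0 : ℝ)..1, f x = 0)
    (hsym : ∀ x ∈ Set.Icc (0 : ℝ) 1, f x = f (1 - x))
    (c : ℝ) (hc : 0 < c)
    (hfourier : ∀ k : ℤ, k ≠ 0 →
      (c / (k : ℂ) ^ 2 : ℂ)
        ≤ ∫ t in (0 : ℝ)..1, (f t : ℂ) * Complex.exp (-(2 * π * Complex.I * k * t)))
    (s : ℕ) (hs : 1 ≤ s) (x : ℕ → ℝ)
    (hgreedy : ∀ N, s ≤ N → ∀ y ∈ Set.Ico (0 : ℝ) 1,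
      ∑ k ∈ Finset.range N, f (Int.fract (x N - x k))
        ≤ ∑ k ∈ Finset.range N, f (Int.fract (y - x k))) :
    ∃ K : ℝ, 0 ≤ K ∧ ∀ N : ℕ, ∑ m ∈ Finset.range N, ∑ n ∈ Finset.range N,
        (Int.fract (x m - x n)^2 - Int.fract (x m - x n) + 6⁻¹) ≤ K * N := by
  obtain ⟨B, hB⟩ := hbdd
  obtain ⟨F, hF, hFc⟩ := aux_F f hcont hsym
  have h0 : fourierCoeff F 0 = 0 := by
    rw [hFc]
    simp [intervalIntegral.integral_ofReal, hmean]
  have hB0 : 0 ≤ B := (abs_nonneg _).trans (hB 0 (by simp))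
  set a : ℤ → ℝ := fun k => (fourierCoeff F k).re with ha_def
  have hle : ∀ k : ℤ, k ≠ 0 → c / (k:ℝ)^2 ≤ a k ∧ (fourierCoeff F k).im = 0 := by
    intro k hk
    have h := hfourier k hk
    rw [← hFc, show (c / (k:ℂ)^2 : ℂ) = ((c / (k:ℝ)^2 : ℝ) : ℂ) by push_cast; rfl, Complex.le_def,
      Complex.ofReal_re, Complex.ofReal_im] at h
    exact ⟨h.1, h.2.symm⟩
  have hpos : ∀ k : ℤ, c * (1 / (k:ℝ)^2) ≤ a k := by
    intro k
    by_cases hk : k = 0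
    · simp [hk, ha_def, h0]
    · have := (hle k hk).1
      rwa [mul_one_div]
  have hFa : ∀ k, fourierCoeff F k = a k := by
    intro k
    by_cases hk : k = 0
    · simp [hk, ha_def, h0]
    · exact Complex.ext (by simp [ha_def]) (by simp [(hle k hk).2])
  have hsumm := aux_summable F a (fun k => le_trans (by positivity) (hpos k)) hFa
  have hpt : ∀ y : ℝ, HasSum (fun k : ℤ => (a k : ℂ) * fourier k (y : UnitAddCircle))
      ((f (Int.fract y) : ℝ) : ℂ) := by
    intro y
    have : Summable (fourierCoeff F) := by
      have h2 : fourierCoeff F = fun k => (a k : ℂ) := funext hFa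
      rw [h2]; exact Complex.summable_ofReal.2 hsumm
    have := has_pointwise_sum_fourier_series_of_summable this (y : UnitAddCircle)
    rw [hF] at this
    simpa only [hFa, smul_eq_mul] using this
  have hneg : ∀ N, s ≤ N → ∑ k ∈ Finset.range N, f (Int.fract (x N - x k)) ≤ 0 := fun N hN =>
    aux_min f F hF h0 N x _ (hgreedy N hN)
  have hE := aux_energy f B hB hsym s hs x hneg
  refine ⟨s * B / (c * (2 * π^2)), by positivity, fun N => ?_⟩
  have s1 := aux_double a x (fun y => f (Int.fract y)) N hpt
  have s2 := (aux_double _ x (fun y => 2 * π ^ 2 * (Int.fract y ^ 2 - Int.fract y + 6⁻¹)) N aux_B2).mul_left c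
  have h3 := hasSum_le (fun k => by
    rw [← mul_assoc]
    exact mul_le_mul_of_nonneg_right (hpos k) (by positivity)) s2 s1
  simp_rw [← Finset.mul_sum] at h3
  have h4 := h3.trans (hE N)
  rw [div_mul_eq_mul_div, le_div_iff₀ (by positivity)]
  linarith

theorem greedy_discrepancy_bound (f : ℝ → ℝ)
    (hbdd : ∃ C : ℝ, ∀ x ∈ Set.Icc (0 : ℝ) 1, |f x| ≤ C)
    (hcont : ContinuousOn f (Set.Icc (0 : ℝ) 1))
    (hmean : ∫ x in (0 : ℝ)..1, f x = 0)
    (hsym : ∀ x ∈ Set.Icc (0 : ℝ) 1, f x = f (1 - x))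
    (c : ℝ) (hc : 0 < c)
    (hfourier : ∀ k : ℤ, k ≠ 0 →
      (c / (k : ℂ) ^ 2 : ℂ)
        ≤ ∫ t in (0 : ℝ)..1, (f t : ℂ) * Complex.exp (-(2 * π * Complex.I * k * t)))
    (s : ℕ) (hs : 1 ≤ s) (x : ℕ → ℝ) (hx : ∀ n, x n ∈ Set.Ico (0 : ℝ) 1)
    (hgreedy : ∀ N, s ≤ N → ∀ y ∈ Set.Ico (0 : ℝ) 1,
      ∑ k ∈ Finset.range N, f (Int.fract (x N - x k))
        ≤ ∑ k ∈ Finset.range N, f (Int.fract (y - x k))) :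
    ∃ C : ℝ, 0 < C ∧ ∀ N : ℕ, 1 ≤ N →
      disc N x ≤ C / (N : ℝ) ^ ((1 : ℝ) / 3) := by
  obtain ⟨K, hK, hKN⟩ := greedy_main f hbdd hcont hmean hsym c hc hfourier s hs x hgreedy
  refine ⟨64 * K + 1, by positivity, fun N hN => ?_⟩
  have hNp : (0:ℝ) < N := by exact_mod_cast hN
  have hr : 0 ≤ (64 * K + 1) / (N : ℝ) ^ ((1 : ℝ) / 3) := by positivity
  refine Real.iSup_le (fun I => ?_) hr
  obtain ⟨⟨α, β⟩, hα, hαβ, hβ⟩ := I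
  have h := aux_disc N hN x hx α β hα hαβ hβ
  refine le_of_pow_le_pow_left₀ (n := 3) (by norm_num) hr (h.trans ?_)
  have e : ((N:ℝ) ^ ((1:ℝ)/3)) ^ 3 = N := by
    rw [← Real.rpow_natCast, ← Real.rpow_mul hNp.le]; norm_num
  rw [div_pow, e]
  calc _ ≤ 64 / (N:ℝ)^2 * (K * N) := mul_le_mul_of_nonneg_left (hKN N) (by positivity)
    _ = (64 * K) / N := by field_simp
    _ ≤ _ := by
      gcongr
      nlinarith [mul_nonneg hK hK, mul_nonneg hK (mul_nonneg hK hK)]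
end
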